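/- Assume in addition that for each fixed x ∈ a the map λ ↦ G_λ(x) is holomorphic on h (which holds for the Heckman–Opdam family). Then for all M, N ∈ ℕ there exists a constant C > 0 such that for every λ ∈ h, every x ∈ a, all unit vectors η₁, …, η_M ∈ a (directions in the λ-variable) and all unit vectors ξ₁, …, ξ_N ∈ a (directions in the x-variable), | ∂^{(λ)}_{η₁} ⋯ ∂^{(λ)}_{η_M} ∂^{(x)}_{ξ₁} ⋯ ∂^{(x)}_{ξ_N} G_λ(x) | ≤ C (1 + |x|)^M (1 + |λ|)^N F_0(x) e^{max_{w∈W} Re (wλ, x)}. -/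

import Mathlib

open scoped BigOperators RealInnerProductSpace Classical

noncomputable section

variable {E : Type*} [NormedAddCommGroup E] [InnerProductSpace ℝ E] [FiniteDimensional ℝ E]

/-- The coroot `α∨ = 2α/|α|²`. -/
def coroot (α : E) : E := (2 / ⟪α, α⟫) • α

/-- The orthogonal reflection `r_α x = x - (α∨, x) α`. -/
def rRefl (α : E) (x : E) : E := x - ⟪coroot α, x⟫ • α

/-- Data of an integral root system with positive subsystem and
a Weyl-invariant positive multiplicity function. -/
structure HOData (E : Type*) [NormedAddCommGroup E] [InnerProductSpace ℝ E] : Type _ where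
  R : Finset E
  Rpos : Finset E
  k : E → ℝ
  k_pos : ∀ α ∈ R, 0 < k α
  root_ne_zero : ∀ α ∈ R, α ≠ 0
  pos_subset : Rpos ⊆ R
  pos_char : ∃ u : E, ∀ α ∈ R, (α ∈ Rpos ↔ 0 < ⟪α, u⟫)
  pos_or_neg : ∀ α ∈ R, α ∈ Rpos ∨ -α ∈ Rpos
  neg_mem : ∀ α ∈ R, -α ∈ R
  integral : ∀ α ∈ R, ∀ β ∈ R, ∃ n : ℤ, ⟪coroot α, β⟫ = (n : ℝ)
  refl_mem : ∀ α ∈ R, ∀ β ∈ R, rRefl α β ∈ R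
  k_inv : ∀ α ∈ R, ∀ β ∈ R, k (rRefl α β) = k β

/-- The Weyl group: the subgroup of linear isometries generated by the root reflections. -/
def weylGroup (D : HOData E) : Subgroup (E ≃ₗᵢ[ℝ] E) :=
  Subgroup.closure {w : E ≃ₗᵢ[ℝ] E | ∃ α ∈ D.R, ∀ x, w x = rRefl α x}

/-- `ρ = (1/2) Σ_{α ∈ R⁺} k_α α`. -/
def rhoHO (D : HOData E) : E := (2:ℝ)⁻¹ • ∑ α ∈ D.Rpos, D.k α • α

/-- Regular points. -/
def HORegular (D : HOData E) (x : E) : Prop := ∀ α ∈ D.R, ⟪α, x⟫ ≠ 0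

/-- The (open) positive Weyl chamber. -/
def posChamber (D : HOData E) : Set E := {x | ∀ α ∈ D.Rpos, 0 < ⟪α, x⟫}

/-- The positive indivisible roots `R₀⁺`. -/
def Rpos0 (D : HOData E) : Finset E := D.Rpos.filter (fun α => (2:ℝ)⁻¹ • α ∉ D.R)

/-- The Opdam function `G_λ` for a real parameter `λ`: an analytic function,
normalized at `0`, satisfying the Cherednik differential-difference system. -/
def IsOpdamR (D : HOData E) (lam : E) (G : E → ℝ) : Prop :=
  AnalyticOnNhd ℝ G Set.univ ∧ G 0 = 1 ∧
  ∀ ξ x, HORegular D x →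
    fderiv ℝ G x ξ =
      (∑ α ∈ D.Rpos, D.k α * ⟪α, ξ⟫ / (1 - Real.exp (-⟪α, x⟫)) * (G (rRefl α x) - G x))
      + ⟪rhoHO D + lam, ξ⟫ * G x

/-- The Opdam function `G_λ` for a complex parameter `λ = l1 + i l2 ∈ h`. -/
def IsOpdamC (D : HOData E) (l1 l2 : E) (G : E → ℂ) : Prop :=
  AnalyticOnNhd ℝ G Set.univ ∧ G 0 = 1 ∧
  ∀ ξ x, HORegular D x →
    fderiv ℝ G x ξ =
      (∑ α ∈ D.Rpos, ((D.k α * ⟪α, ξ⟫ / (1 - Real.exp (-⟪α, x⟫)) : ℝ) : ℂ)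
          * (G (rRefl α x) - G x))
      + (((⟪rhoHO D + l1, ξ⟫ : ℝ) : ℂ) + Complex.I * ((⟪l2, ξ⟫ : ℝ) : ℂ)) * G x

/-- The symmetrization `F(x) = |W|⁻¹ Σ_{w ∈ W} G(w x)` (real valued case). -/
def Fsym (D : HOData E) [Fintype (weylGroup D)] (G : E → ℝ) (x : E) : ℝ :=
  (Fintype.card (weylGroup D) : ℝ)⁻¹ * ∑ w : weylGroup D, G (w.1 x)

/-- The symmetrization `F(x) = |W|⁻¹ Σ_{w ∈ W} G(w x)` (complex valued case). -/
def FsymC (D : HOData E) [Fintype (weylGroup D)] (G : E → ℂ) (x : E) : ℂ :=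
  (Fintype.card (weylGroup D) : ℂ)⁻¹ * ∑ w : weylGroup D, G (w.1 x)

/-- `max_{w ∈ W} (w λ, x)`. -/
def maxW (D : HOData E) [Fintype (weylGroup D)] (lam x : E) : ℝ :=
  ⨆ w : weylGroup D, ⟪w.1 lam, x⟫

/-!
On a chamber the Cherednik system is an ordinary differential system, but its coefficients blow up
on the walls. Choose a centre `p` near `x`, at distance much smaller than a scale `τ ≈ (1 + |λ|)⁻¹`,
such that every root hyperplane avoiding `p` stays at distance of order `τ` from the segment
`[p, x]`. Contracting the system with the Euler field `y ↦ y - p` removes the poles on the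
hyperplanes through `p`, and all coefficients then have derivatives of order `j` bounded by
`O(τ⁻ʲ)`. Since `[∂_ξ, y - p] = ∂_ξ`, differentiating `N` times adds `N ∂^N G` to the left side. At
a maximum of `|∂^N G(w y)|` over `w ∈ W` and `y ∈ [p, x]` this positive term dominates, so `∂^N G`
is controlled by the lower derivatives: each derivative costs one factor `1 + |λ|`.

For `N = 0` the same maximum principle, applied to `G_λ / G₀`, gives
`|G_λ(x)| ≤ G₀(x) e^{max_w (w Re λ, x)} ≤ |W| F₀(x) e^{max_w (w Re λ, x)}`, and the symmetrised
system gives a Harnack inequality for `F₀` that makes this majorant comparable at points at distance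
`(1 + |λ|)⁻¹`.

The spectral derivatives come from Cauchy estimates in `λ` on polydiscs of radius of order
`(1 + |x|)⁻¹`, on which the exponential factor changes by a bounded amount.
-/

section OneVariable

open scoped ContDiff

/-- The function `s ↦ 1 / (1 - e^{-s})` whose values at `⟪α, x⟫` are the coefficients of the
Cherednik system. The junk value at the pole `s = 0` is `0`. -/
def cherednikKernel (s : ℝ) : ℝ := (1 - Real.exp (-s))⁻¹

/-- The Todd function: the smooth extension of `s ↦ s / (1 - e^{-s})` across `s = 0`. It appears
because the Euler field cancels the pole of `cherednikKernel`. -/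
def toddFun (s : ℝ) : ℝ := (dslope (fun u : ℝ => 1 - Real.exp (-u)) 0 s)⁻¹

theorem one_sub_exp_neg_ne_zero {s : ℝ} (hs : s ≠ 0) : 1 - Real.exp (-s) ≠ 0 := by
  simpa [sub_eq_zero, eq_comm (a := (1 : ℝ))] using hs

theorem dslope_one_sub_exp_neg_pos (s : ℝ) :
    0 < dslope (fun u : ℝ => 1 - Real.exp (-u)) 0 s := by
  rcases eq_or_ne s 0 with rfl | hs
  · have h : HasDerivAt (fun u : ℝ => 1 - Real.exp (-u)) 1 0 := by
      simpa using ((hasDerivAt_neg (0 : ℝ)).exp).const_sub 1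
    simp [dslope_same, h.deriv]
  · rw [dslope_of_ne _ hs, slope_def_field]
    simp only [neg_zero, Real.exp_zero, sub_self, sub_zero]
    rcases lt_or_gt_of_ne hs with h | h
    · exact div_pos_of_neg_of_neg (by linarith [Real.one_lt_exp_iff.2 (neg_pos.2 h)]) h
    · exact div_pos (by linarith [Real.exp_lt_one_iff.2 (neg_neg_of_pos h)]) h

theorem toddFun_pos (s : ℝ) : 0 < toddFun s := inv_pos.2 (dslope_one_sub_exp_neg_pos s)

theorem mul_cherednikKernel {s : ℝ} (hs : s ≠ 0) : s * cherednikKernel s = toddFun s := by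
  rw [toddFun, dslope_of_ne _ hs, slope_def_field]
  simp [cherednikKernel, div_eq_mul_inv]

theorem contDiff_toddFun : ContDiff ℝ ∞ toddFun := by
  refine contDiff_iff_contDiffAt.2 fun s => ContDiffAt.inv ?_ (dslope_one_sub_exp_neg_pos s).ne'
  rcases eq_or_ne s 0 with rfl | hs
  · obtain ⟨p, hp⟩ : AnalyticAt ℝ (fun u : ℝ => 1 - Real.exp (-u)) 0 := by fun_prop
    exact hp.has_fpower_series_dslope_fslope.analyticAt.contDiffAt
  · refine ContDiffAt.congr_of_eventuallyEq ?_ (dslope_eventuallyEq_slope_of_ne _ hs)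
    simp only [slope_fun_def_field]
    exact ContDiffAt.div (by fun_prop) (by fun_prop) (by simpa using hs)

theorem contDiffAt_cherednikKernel {s : ℝ} (hs : s ≠ 0) : ContDiffAt ℝ ∞ cherednikKernel s :=
  ContDiffAt.inv (by fun_prop) (one_sub_exp_neg_ne_zero hs)

theorem hasDerivAt_cherednikKernel {s : ℝ} (hs : s ≠ 0) :
    HasDerivAt cherednikKernel (cherednikKernel s - cherednikKernel s ^ 2) s := by
  have h0 := one_sub_exp_neg_ne_zero hs
  refine ((((hasDerivAt_id s).neg).exp).const_sub 1).inv h0 |>.congr_deriv ?_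
  simp only [id, Pi.neg_apply, cherednikKernel]
  field_simp
  ring

theorem abs_cherednikKernel_le {s : ℝ} (hs : s ≠ 0) : |cherednikKernel s| ≤ 1 + |s|⁻¹ := by
  have := abs_pos.2 hs
  suffices key : |s| / (|s| + 1) ≤ |1 - Real.exp (-s)| by
    calc |cherednikKernel s| = |1 - Real.exp (-s)|⁻¹ := abs_inv _
      _ ≤ (|s| / (|s| + 1))⁻¹ := inv_anti₀ (by positivity) key
      _ = 1 + |s|⁻¹ := by field_simp
  rw [div_le_iff₀ (by positivity)]
  rcases lt_or_gt_of_ne hs with h | h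
  · have h1 := Real.add_one_le_exp (-s)
    rw [abs_of_neg h, abs_of_neg (by linarith)]
    nlinarith
  · have h1 : Real.exp (-s) * (s + 1) ≤ 1 := by
      calc Real.exp (-s) * (s + 1) ≤ Real.exp (-s) * Real.exp s := by
            gcongr
            exact Real.add_one_le_exp s
        _ = 1 := by rw [← Real.exp_add, neg_add_cancel, Real.exp_zero]
    rw [abs_of_pos h, abs_of_pos (by linarith [Real.exp_lt_one_iff.2 (neg_neg_of_pos h)])]
    linarith

/-- The Riccati equation `ψ' = ψ - ψ²` makes every derivative of `ψ` a polynomial in `ψ`. -/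
theorem exists_iteratedDeriv_cherednikKernel_eq_eval (j : ℕ) :
    ∃ P : Polynomial ℝ, P.natDegree ≤ j + 1 ∧
      ∀ s : ℝ, s ≠ 0 → iteratedDeriv j cherednikKernel s = P.eval (cherednikKernel s) := by
  induction j with
  | zero => exact ⟨Polynomial.X, by simp, fun s _ => by simp⟩
  | succ j ih =>
    obtain ⟨P, hP, hPs⟩ := ih
    refine ⟨Polynomial.derivative P * (Polynomial.X - Polynomial.X ^ 2), ?_, fun s hs => ?_⟩
    · have hderiv := Polynomial.natDegree_derivative_le P
      have hquad : (Polynomial.X - Polynomial.X ^ 2 : Polynomial ℝ).natDegree ≤ 2 := by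
        compute_degree
      exact Polynomial.natDegree_mul_le.trans (by omega)
    · have heq : iteratedDeriv j cherednikKernel =ᶠ[nhds s]
          fun u => P.eval (cherednikKernel u) := by
        filter_upwards [isOpen_ne.mem_nhds hs] with u hu using hPs u hu
      rw [iteratedDeriv_succ, heq.deriv_eq]
      refine ((P.hasDerivAt _).comp s (hasDerivAt_cherednikKernel hs)).deriv.trans ?_
      simp

theorem exists_abs_iteratedDeriv_cherednikKernel_le (j : ℕ) :
    ∃ C : ℝ, 0 ≤ C ∧
      ∀ s : ℝ, s ≠ 0 → |iteratedDeriv j cherednikKernel s| ≤ C * (1 + |s|⁻¹) ^ (j + 1) := by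
  obtain ⟨P, hP, hPs⟩ := exists_iteratedDeriv_cherednikKernel_eq_eval j
  refine ⟨∑ i ∈ Finset.range (P.natDegree + 1), |P.coeff i|, by positivity, fun s hs => ?_⟩
  rw [hPs s hs, Polynomial.eval_eq_sum_range, Finset.sum_mul]
  refine (Finset.abs_sum_le_sum_abs _ _).trans (Finset.sum_le_sum fun i hi => ?_)
  rw [abs_mul, abs_pow]
  gcongr
  calc |cherednikKernel s| ^ i ≤ (1 + |s|⁻¹) ^ i := by gcongr; exact abs_cherednikKernel_le hs
    _ ≤ (1 + |s|⁻¹) ^ (j + 1) :=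
      pow_le_pow_right₀ (by simp) (by have := Finset.mem_range.1 hi; omega)

theorem exists_abs_iteratedDeriv_toddFun_le (j : ℕ) (K : ℝ) :
    ∃ C : ℝ, 0 ≤ C ∧ ∀ s : ℝ, |s| ≤ K → |iteratedDeriv j toddFun s| ≤ C := by
  obtain ⟨C, hC⟩ := (isCompact_Icc (a := -K) (b := K)).exists_bound_of_continuousOn
    (contDiff_toddFun.continuous_iteratedDeriv j (by exact_mod_cast le_top)).continuousOn
  exact ⟨max C 0, le_max_right _ _, fun s hs => (hC s (abs_le.1 hs)).trans (le_max_left _ _)⟩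

end OneVariable

section Calculus

open scoped ContDiff Topology

variable {V F : Type*} [NormedAddCommGroup V] [NormedSpace ℝ V]
  [NormedAddCommGroup F] [NormedSpace ℝ F]

theorem norm_iteratedFDeriv_comp_clm_le {f : ℝ → F} (L : V →L[ℝ] ℝ) {y : V} {j : ℕ}
    (hf : ContDiffAt ℝ j f (L y)) :
    ‖iteratedFDeriv ℝ j (fun z => f (L z)) y‖ ≤ ‖iteratedDeriv j f (L y)‖ * ‖L‖ ^ j := by
  obtain ⟨U, hfU, hU, hy⟩ := eventually_nhds_iff.1 (hf.eventually (by simp))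
  have hpre : IsOpen (L ⁻¹' U) := hU.preimage L.continuous
  have hcomp := L.iteratedFDerivWithin_comp_right (x := y)
    (fun s hs => (hfU s hs).contDiffWithinAt) hU.uniqueDiffOn hpre.uniqueDiffOn hy le_rfl
  rw [iteratedFDerivWithin_of_isOpen j hpre hy, iteratedFDerivWithin_of_isOpen j hU hy] at hcomp
  change ‖iteratedFDeriv ℝ j (f ∘ L) y‖ ≤ _
  rw [hcomp, ← norm_iteratedFDeriv_eq_norm_iteratedDeriv]
  simpa using (iteratedFDeriv ℝ j f (L y)).norm_compContinuousLinearMap_le fun _ => L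

section Leibniz

variable {K : Type*} [NormedField K] [NormedAlgebra ℝ K] [NormedSpace K F] [IsScalarTower ℝ K F]
  {a : V → K} {g : V → F} {y : V} {N : ℕ}

theorem norm_iteratedFDeriv_smul_le_of_contDiffAt (ha : ContDiffAt ℝ N a y)
    (hg : ContDiffAt ℝ N g y) :
    ‖iteratedFDeriv ℝ N (fun z => a z • g z) y‖ ≤ ∑ i ∈ Finset.range (N + 1),
      (N.choose i : ℝ) * ‖iteratedFDeriv ℝ i a y‖ * ‖iteratedFDeriv ℝ (N - i) g y‖ := by
  obtain ⟨U, hag, hU, hy⟩ := eventually_nhds_iff.1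
    ((ha.eventually (by simp)).and (hg.eventually (by simp)))
  simpa only [iteratedFDerivWithin_of_isOpen _ hU hy] using
    norm_iteratedFDerivWithin_smul_le (𝕜 := ℝ) (fun z hz => (hag z hz).1.contDiffWithinAt)
      (fun z hz => (hag z hz).2.contDiffWithinAt) hU.uniqueDiffOn hy (n := N) le_rfl

theorem norm_iteratedFDeriv_sub_const_smul_le [SMulCommClass ℝ K F] (ha : ContDiffAt ℝ N a y)
    (hg : ContDiffAt ℝ N g y) :
    ‖iteratedFDeriv ℝ N (fun z => a z • g z) y - a y • iteratedFDeriv ℝ N g y‖ ≤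
      ∑ i ∈ Finset.range N, (N.choose (i + 1) : ℝ) * ‖iteratedFDeriv ℝ (i + 1) a y‖ *
        ‖iteratedFDeriv ℝ (N - (i + 1)) g y‖ := by
  have ha' : ContDiffAt ℝ N (fun z => a z - a y) y := ha.sub contDiffAt_const
  have hsplit : iteratedFDeriv ℝ N (fun z => a z • g z) y - a y • iteratedFDeriv ℝ N g y =
      iteratedFDeriv ℝ N (fun z => (a z - a y) • g z) y := by
    rw [← iteratedFDeriv_const_smul_apply' hg,
      ← fun_iteratedFDeriv_sub_apply (f := fun z => a z • g z) (g := fun z => a y • g z)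
        (ha.smul hg) (contDiffAt_const.smul hg)]
    simp only [sub_smul]
  have hderiv : ∀ i < N, iteratedFDeriv ℝ (i + 1) (fun z => a z - a y) y =
      iteratedFDeriv ℝ (i + 1) a y := fun i hi => by
    rw [fun_iteratedFDeriv_sub_apply (ha.of_le (by exact_mod_cast hi)) contDiffAt_const,
      iteratedFDeriv_const_of_ne (by omega)]
    simp
  rw [hsplit]
  refine (norm_iteratedFDeriv_smul_le_of_contDiffAt ha' hg).trans ?_
  rw [Finset.sum_range_succ']
  simp only [norm_iteratedFDeriv_zero, sub_self, norm_zero, mul_zero, zero_mul, add_zero]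
  refine Finset.sum_le_sum fun i hi => ?_
  rw [hderiv i (Finset.mem_range.1 hi)]

theorem norm_iteratedFDeriv_smul_sub_smul_le [SMulCommClass ℝ K F] {A B Λ : ℝ}
    (ha : ContDiffAt ℝ N a y) (hg : ContDiffAt ℝ N g y)
    (hA : ∀ i, 1 ≤ i → i ≤ N → ‖iteratedFDeriv ℝ i a y‖ ≤ A * Λ ^ i)
    (hB : ∀ j < N, ‖iteratedFDeriv ℝ j g y‖ ≤ B * Λ ^ j) :
    ‖iteratedFDeriv ℝ N (fun z => a z • g z) y - a y • iteratedFDeriv ℝ N g y‖ ≤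
      (2 ^ N - 1) * (A * B * Λ ^ N) := by
  have hchoose : ∑ i ∈ Finset.range N, (N.choose (i + 1) : ℝ) = 2 ^ N - 1 := by
    have h := Nat.sum_range_choose N
    rw [Finset.sum_range_succ', Nat.choose_zero_right] at h
    exact eq_sub_of_add_eq (by exact_mod_cast h)
  refine (norm_iteratedFDeriv_sub_const_smul_le ha hg).trans ?_
  rw [← hchoose, Finset.sum_mul]
  refine Finset.sum_le_sum fun i hi => ?_
  have hi' : i + 1 ≤ N := Finset.mem_range.1 hi
  have hpow : Λ ^ N = Λ ^ (i + 1) * Λ ^ (N - (i + 1)) := by rw [← pow_add, Nat.add_sub_cancel' hi']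
  calc (N.choose (i + 1) : ℝ) * ‖iteratedFDeriv ℝ (i + 1) a y‖ *
        ‖iteratedFDeriv ℝ (N - (i + 1)) g y‖
      ≤ N.choose (i + 1) * (A * Λ ^ (i + 1)) * (B * Λ ^ (N - (i + 1))) := by
        have hA' := hA (i + 1) (by omega) hi'
        have := (norm_nonneg _).trans hA'
        gcongr
        exact hB _ (by omega)
    _ = N.choose (i + 1) * (A * B * Λ ^ N) := by rw [hpow]; ring

end Leibniz

theorem norm_iteratedFDeriv_clm_sub_const_le {L : V →L[ℝ] F} {p y : V} {A Λ : ℝ} (hA : 0 ≤ A)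
    (hΛ : 0 ≤ Λ) (hL : ‖L‖ ≤ A * Λ) {i : ℕ} (hi : 1 ≤ i) :
    ‖iteratedFDeriv ℝ i (fun z => L (z - p)) y‖ ≤ A * Λ ^ i := by
  obtain ⟨i, rfl⟩ := Nat.exists_eq_add_of_le' hi
  have hd : fderiv ℝ (fun z => L (z - p)) = fun _ => L := funext fun z =>
    (L.hasFDerivAt.comp z ((hasFDerivAt_id z).sub_const p)).fderiv
  rw [← norm_iteratedFDeriv_fderiv, hd]
  rcases i with _ | i
  · simpa using hL
  · rw [iteratedFDeriv_succ_const]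
    simp only [Pi.zero_apply, norm_zero]
    positivity

theorem contDiff_iteratedFDeriv_apply {g : V → F} (hg : ContDiff ℝ ∞ g) {N : ℕ} (ξ : Fin N → V) :
    ContDiff ℝ ∞ (fun z => iteratedFDeriv ℝ N g z ξ) :=
  (ContinuousMultilinearMap.apply ℝ (fun _ : Fin N => V) F ξ).contDiff.comp
    (hg.iteratedFDeriv_right (m := ∞) (i := N) (by exact_mod_cast le_top))

theorem iteratedFDeriv_succ_apply_eq_fderiv {g : V → F} (hg : ContDiff ℝ ∞ g) {N : ℕ}
    (ξ : Fin (N + 1) → V) (y : V) :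
    iteratedFDeriv ℝ (N + 1) g y ξ =
      fderiv ℝ (fun z => iteratedFDeriv ℝ N g z (Fin.tail ξ)) y (ξ 0) :=
  (hg.differentiable_iteratedFDeriv
    (by exact_mod_cast ENat.natCast_lt_top N)).differentiableAt.iteratedFDeriv_succ_apply_left'

/-- The commutator of `∂_ξ` with the Euler field `∂_{z - p}` is `∂_ξ`, so `N` derivatives produce
the zeroth order term `N • ∂^N g` to which the maximum principle applies. -/
theorem iteratedFDeriv_fderiv_sub_apply {g : V → F} (hg : ContDiff ℝ ∞ g) (p : V) (N : ℕ) (y : V)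
    (ξ : Fin N → V) :
    iteratedFDeriv ℝ N (fun z => fderiv ℝ g z (z - p)) y ξ =
      fderiv ℝ (fun z => iteratedFDeriv ℝ N g z ξ) y (y - p) +
        (N : ℝ) • iteratedFDeriv ℝ N g y ξ := by
  have hEuler : ContDiff ℝ ∞ (fun z => fderiv ℝ g z (z - p)) :=
    (hg.fderiv_right (m := ∞) (by simp)).clm_apply (by fun_prop)
  induction N generalizing y with
  | zero => simp
  | succ n ih =>
    set u := fun z => iteratedFDeriv ℝ n g z (Fin.tail ξ)
    have hu : ContDiff ℝ ∞ u := contDiff_iteratedFDeriv_apply hg (Fin.tail ξ)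
    have hsymm : IsSymmSndFDerivAt ℝ u y := hu.contDiffAt.isSymmSndFDerivAt (by
      simpa using WithTop.coe_le_coe.2 (le_top (a := (2 : ℕ∞))))
    have hdu : HasFDerivAt u (fderiv ℝ u y) y := (hu.differentiable (by simp) y).hasFDerivAt
    have hddu : HasFDerivAt (fderiv ℝ u) (fderiv ℝ (fderiv ℝ u) y) y :=
      ((hu.fderiv_right (m := ∞) (by simp)).differentiable (by simp) y).hasFDerivAt
    have hlhs := (hddu.clm_apply ((hasFDerivAt_id y).sub_const p)).add (hdu.const_smul (n : ℝ))
    have hrhs := hddu.clm_apply (hasFDerivAt_const (ξ 0) y)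
    have hlhs' : fderiv ℝ (fun z => fderiv ℝ u z (z - p) + (n : ℝ) • u z) y = _ := hlhs.fderiv
    simp only [iteratedFDeriv_succ_apply_eq_fderiv hEuler, iteratedFDeriv_succ_apply_eq_fderiv hg,
      ih]
    rw [hlhs', hrhs.fderiv]
    simp only [add_apply, ContinuousLinearMap.comp_apply, ContinuousLinearMap.flip_apply,
      smul_apply, id, ContinuousLinearMap.id_apply, zero_apply, map_zero, zero_add]
    rw [hsymm (ξ 0) (y - p), Nat.cast_succ, add_smul, one_smul]
    abel

end Calculus

section MaximumPrinciple

theorem exists_forall_le_and_mul_deriv_nonneg {ι : Type*} [Finite ι] [Nonempty ι]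
    {f f' : ι → ℝ → ℝ} (hf : ∀ i t, HasDerivAt (f i) (f' i t) t) :
    ∃ i, ∃ t ∈ Set.Icc (0 : ℝ) 1,
      (∀ j, ∀ s ∈ Set.Icc (0 : ℝ) 1, f j s ≤ f i t) ∧ 0 ≤ t * f' i t := by
  have hmax : ∀ i, ∃ t ∈ Set.Icc (0 : ℝ) 1, IsMaxOn (f i) (Set.Icc 0 1) t := fun i =>
    isCompact_Icc.exists_isMaxOn (Set.nonempty_Icc.2 zero_le_one)
      fun t _ => (hf i t).continuousAt.continuousWithinAt
  choose τ hτ hτmax using hmax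
  obtain ⟨i, hi⟩ := Finite.exists_max fun i => f i (τ i)
  have hall : ∀ j, ∀ s ∈ Set.Icc (0 : ℝ) 1, f j s ≤ f i (τ i) :=
    fun j s hs => (hτmax j hs).trans (hi j)
  refine ⟨i, τ i, hτ i, hall, ?_⟩
  rcases (hτ i).1.eq_or_lt with h0 | h0
  · simp [← h0]
  · refine mul_nonneg h0.le ?_
    have hslope := (hasDerivAt_iff_tendsto_slope.1 (hf i (τ i))).mono_left
      (nhdsWithin_mono (τ i) (s := Set.Iio (τ i)) fun s hs => ne_of_lt hs)
    refine ge_of_tendsto hslope ?_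
    filter_upwards [Ioo_mem_nhdsLT h0] with s hs
    rw [slope_def_field]
    exact div_nonneg_of_nonpos
      (sub_nonpos.2 (hall i s ⟨hs.1.le, hs.2.le.trans (hτ i).2⟩)) (sub_nonpos.2 hs.2.le)

variable {ι κ : Type*} [Finite ι] {s : Finset κ} {σ : κ → ι → ι} {f f' r : ι → ℝ → ℝ}
  {a : κ → ι → ℝ → ℝ} {M : ℝ}

theorem le_of_forall_lt_neg_of_exchange (hf : ∀ i t, HasDerivAt (f i) (f' i t) t)
    (ha : ∀ i, ∀ t ∈ Set.Icc (0 : ℝ) 1, ∀ k ∈ s, 0 ≤ a k i t)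
    (hle : ∀ i, ∀ t ∈ Set.Icc (0 : ℝ) 1,
      t * f' i t ≤ ∑ k ∈ s, a k i t * (f (σ k i) t - f i t) + r i t)
    (hr : ∀ i, ∀ t ∈ Set.Icc (0 : ℝ) 1, M < f i t → r i t < 0) (i : ι) {t : ℝ}
    (ht : t ∈ Set.Icc (0 : ℝ) 1) : f i t ≤ M := by
  have : Nonempty ι := ⟨i⟩
  obtain ⟨j, u, hu, hmax, hderiv⟩ := exists_forall_le_and_mul_deriv_nonneg hf
  by_contra! hlt
  have hexchange : ∑ k ∈ s, a k j u * (f (σ k j) u - f j u) ≤ 0 :=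
    Finset.sum_nonpos fun k hk =>
      mul_nonpos_of_nonneg_of_nonpos (ha j u hu k hk) (sub_nonpos.2 (hmax (σ k j) u hu))
  linarith [hle j u hu, hr j u hu (hlt.trans_le (hmax i t ht))]

theorem le_of_forall_lt_nonpos_of_exchange (hf : ∀ i t, HasDerivAt (f i) (f' i t) t)
    (ha : ∀ i, ∀ t ∈ Set.Icc (0 : ℝ) 1, ∀ k ∈ s, 0 ≤ a k i t)
    (hle : ∀ i, ∀ t ∈ Set.Icc (0 : ℝ) 1,
      t * f' i t ≤ ∑ k ∈ s, a k i t * (f (σ k i) t - f i t) + t * r i t)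
    (h0 : ∀ i, f i 0 ≤ M) (hr : ∀ i, ∀ t ∈ Set.Icc (0 : ℝ) 1, M < f i t → r i t ≤ 0) (i : ι) :
    f i 1 ≤ M := by
  refine le_of_forall_pos_le_add fun ε hε => ?_
  have htilt := le_of_forall_lt_neg_of_exchange (s := s) (σ := σ) (a := a) (M := M)
    (f := fun i t => f i t - t * ε) (r := fun i t => t * r i t - t * ε)
    (fun i t => (hf i t).sub ((hasDerivAt_id t).mul_const ε)) ha
    (fun i t ht => by
      simpa only [sub_sub_sub_cancel_right, one_mul, mul_sub, add_sub_assoc] using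
        sub_le_sub_right (hle i t ht) (t * ε))
    (fun i t ht hM => by
      rcases ht.1.eq_or_lt with rfl | hpos
      · linarith [h0 i]
      · have hMf : M < f i t := by linarith [mul_pos hpos hε]
        nlinarith [hr i t ht hMf]) i (Set.right_mem_Icc.2 zero_le_one)
  linarith

end MaximumPrinciple

section InteriorEstimate

open scoped ContDiff Topology

variable {V : Type*} [NormedAddCommGroup V] [NormedSpace ℝ V]

theorem two_mul_inner_smul_sub_le {F : Type*} [NormedAddCommGroup F] [InnerProductSpace ℝ F]
    {a δ : ℝ} (hδ : 0 ≤ δ) (ha : -δ ≤ a) (u v : F) :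
    2 * ⟪u, a • (v - u)⟫ ≤ |a| * (‖v‖ ^ 2 - ‖u‖ ^ 2) + 4 * δ * ‖u‖ ^ 2 := by
  have hsub : 0 ≤ ‖v‖ ^ 2 - 2 * ⟪v, u⟫ + ‖u‖ ^ 2 := norm_sub_sq_real v u ▸ sq_nonneg _
  have hadd : 0 ≤ ‖v‖ ^ 2 + 2 * ⟪v, u⟫ + ‖u‖ ^ 2 := norm_add_sq_real v u ▸ sq_nonneg _
  rw [inner_smul_right, inner_sub_right, real_inner_self_eq_norm_sq, real_inner_comm]
  rcases le_total 0 a with h | h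
  · rw [abs_of_nonneg h]
    nlinarith [mul_nonneg h hsub, mul_nonneg hδ (sq_nonneg ‖u‖)]
  · rw [abs_of_nonpos h]
    nlinarith [mul_nonneg (neg_nonneg.2 h) hadd,
      mul_nonneg (by linarith : 0 ≤ a + δ) (sq_nonneg ‖u‖)]

theorem two_mul_inner_mul_self_le (c u : ℂ) : 2 * ⟪u, c * u⟫ ≤ 2 * ‖c‖ * ‖u‖ ^ 2 := by
  have h := real_inner_le_norm u (c * u)
  rw [norm_mul] at h
  linarith

theorem two_mul_inner_le_of_norm_sub_exchange_le {κ : Type*} {s : Finset κ} {u du c : ℂ}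
    {v : κ → ℂ} {b : κ → ℝ} {N : ℕ} {δ Q : ℝ} (hN : 1 ≤ N) (hδ : 0 ≤ δ) (hb : ∀ k ∈ s, -δ ≤ b k)
    (hc : 2 * (s.card * δ) + ‖c‖ ≤ 1 / 2)
    (hQ : ‖du + (N : ℝ) • u - (∑ k ∈ s, b k • (v k - u) + c * u)‖ ≤ Q) :
    2 * ⟪u, du⟫ ≤ ∑ k ∈ s, |b k| * (‖v k‖ ^ 2 - ‖u‖ ^ 2) + ‖u‖ * (2 * Q - ‖u‖) := by
  set e := du + (N : ℝ) • u - (∑ k ∈ s, b k • (v k - u) + c * u) with he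
  have hdu : du = ∑ k ∈ s, b k • (v k - u) + c * u - (N : ℝ) • u + e := by rw [he]; abel
  have hexchange : 2 * ⟪u, ∑ k ∈ s, b k • (v k - u)⟫ ≤
      ∑ k ∈ s, |b k| * (‖v k‖ ^ 2 - ‖u‖ ^ 2) + 4 * (s.card * δ) * ‖u‖ ^ 2 := by
    rw [inner_sum, Finset.mul_sum]
    refine (Finset.sum_le_sum fun k hk =>
      two_mul_inner_smul_sub_le hδ (hb k hk) u (v k)).trans_eq ?_
    rw [Finset.sum_add_distrib, Finset.sum_const, nsmul_eq_mul]
    ring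
  have herror : ⟪u, e⟫ ≤ ‖u‖ * Q :=
    (real_inner_le_norm u e).trans (mul_le_mul_of_nonneg_left hQ (norm_nonneg u))
  have hN' : ‖u‖ ^ 2 ≤ N * ‖u‖ ^ 2 :=
    le_mul_of_one_le_left (sq_nonneg _) (by exact_mod_cast hN)
  rw [hdu, inner_add_right, inner_sub_right, inner_add_right, inner_smul_right,
    real_inner_self_eq_norm_sq]
  linarith [two_mul_inner_mul_self_le c u, mul_le_mul_of_nonneg_right hc (sq_nonneg ‖u‖)]

section Differentiated

variable {κ : Type*} {s : Finset κ} {g : V → ℂ} {h : κ → V → ℂ} {a : κ → V → ℝ} {L : V →L[ℝ] ℂ}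
  {p y : V} {N : ℕ} {A B Λ : ℝ}

theorem norm_iteratedFDeriv_exchange_sub_le (hg : ContDiff ℝ ∞ g) (hh : ∀ k, ContDiff ℝ ∞ (h k))
    (ha : ∀ k ∈ s, ContDiffAt ℝ N (a k) y) (hA : 0 ≤ A) (hΛ : 0 ≤ Λ)
    (haA : ∀ k ∈ s, ∀ i, 1 ≤ i → i ≤ N → ‖iteratedFDeriv ℝ i (a k) y‖ ≤ A * Λ ^ i)
    (hLA : ‖L‖ ≤ A * Λ) (hgB : ∀ j < N, ‖iteratedFDeriv ℝ j g y‖ ≤ B * Λ ^ j)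
    (hhB : ∀ k ∈ s, ∀ j < N, ‖iteratedFDeriv ℝ j (h k) y‖ ≤ B * Λ ^ j) :
    ‖iteratedFDeriv ℝ N (fun z => ∑ k ∈ s, a k z • (h k z - g z) + L (z - p) * g z) y -
        (∑ k ∈ s, a k y • (iteratedFDeriv ℝ N (h k) y - iteratedFDeriv ℝ N g y) +
          L (y - p) • iteratedFDeriv ℝ N g y)‖ ≤
      (2 * s.card + 1) * ((2 ^ N - 1) * (A * B * Λ ^ N)) := by
  have hgN : ∀ {j : ℕ}, ContDiffAt ℝ j g y := (hg.of_le (by exact_mod_cast le_top)).contDiffAt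
  have hhN : ∀ k, ∀ {j : ℕ}, ContDiffAt ℝ j (h k) y := fun k =>
    ((hh k).of_le (by exact_mod_cast le_top)).contDiffAt
  have hLN : ContDiffAt ℝ N (fun z => L (z - p)) y := by fun_prop
  have hdiff : ∀ k, ∀ {j : ℕ}, iteratedFDeriv ℝ j (fun z => h k z - g z) y =
      iteratedFDeriv ℝ j (h k) y - iteratedFDeriv ℝ j g y := fun k _ =>
    fun_iteratedFDeriv_sub_apply (hhN k) hgN
  have hexchangeN : ∀ k ∈ s, ContDiffAt ℝ N (fun z => a k z • (h k z - g z)) y := fun k hk =>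
    (ha k hk).smul ((hhN k).sub hgN)
  have hpotentialN : ContDiffAt ℝ N (fun z => L (z - p) • g z) y := hLN.smul hgN
  have hexchange : ∀ k ∈ s, ‖iteratedFDeriv ℝ N (fun z => a k z • (h k z - g z)) y -
      a k y • (iteratedFDeriv ℝ N (h k) y - iteratedFDeriv ℝ N g y)‖ ≤
        (2 ^ N - 1) * (A * (2 * B) * Λ ^ N) := fun k hk => by
    rw [← hdiff]
    refine norm_iteratedFDeriv_smul_sub_smul_le (ha k hk) ((hhN k).sub hgN) (haA k hk)
      fun j hj => ?_
    rw [hdiff]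
    linarith [norm_sub_le (iteratedFDeriv ℝ j (h k) y) (iteratedFDeriv ℝ j g y), hgB j hj,
      hhB k hk j hj]
  have hpotential := norm_iteratedFDeriv_smul_sub_smul_le hLN hgN
    (fun i hi _ => norm_iteratedFDeriv_clm_sub_const_le hA hΛ hLA hi) hgB
  have hsum := norm_sum_le_of_le s hexchange
  rw [Finset.sum_const, nsmul_eq_mul, Finset.sum_sub_distrib] at hsum
  simp only [← smul_eq_mul (L _)]
  rw [fun_iteratedFDeriv_add_apply (ContDiffAt.sum hexchangeN) hpotentialN,
    iteratedFDeriv_fun_sum_apply hexchangeN, add_sub_add_comm]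
  linarith [norm_add_le_of_le hsum hpotential]

theorem norm_fderiv_iteratedFDeriv_apply_add_sub_le (hg : ContDiff ℝ ∞ g)
    (hh : ∀ k, ContDiff ℝ ∞ (h k)) (ha : ∀ k ∈ s, ContDiffAt ℝ N (a k) y)
    (heq : ∀ᶠ z in 𝓝 y,
      fderiv ℝ g z (z - p) = ∑ k ∈ s, a k z • (h k z - g z) + L (z - p) * g z)
    (hA : 0 ≤ A) (hΛ : 0 ≤ Λ)
    (haA : ∀ k ∈ s, ∀ i, 1 ≤ i → i ≤ N → ‖iteratedFDeriv ℝ i (a k) y‖ ≤ A * Λ ^ i)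
    (hLA : ‖L‖ ≤ A * Λ) (hgB : ∀ j < N, ‖iteratedFDeriv ℝ j g y‖ ≤ B * Λ ^ j)
    (hhB : ∀ k ∈ s, ∀ j < N, ‖iteratedFDeriv ℝ j (h k) y‖ ≤ B * Λ ^ j) (ξ : Fin N → V) :
    ‖fderiv ℝ (fun z => iteratedFDeriv ℝ N g z ξ) y (y - p) + (N : ℝ) • iteratedFDeriv ℝ N g y ξ -
        (∑ k ∈ s, a k y • (iteratedFDeriv ℝ N (h k) y ξ - iteratedFDeriv ℝ N g y ξ) +
          L (y - p) * iteratedFDeriv ℝ N g y ξ)‖ ≤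
      (2 * s.card + 1) * ((2 ^ N - 1) * (A * B * Λ ^ N)) * ∏ i, ‖ξ i‖ := by
  rw [← iteratedFDeriv_fderiv_sub_apply hg, (Filter.EventuallyEq.iteratedFDeriv ℝ heq N).eq_of_nhds]
  simpa [sum_apply] using
    ContinuousMultilinearMap.le_of_opNorm_le
      (norm_iteratedFDeriv_exchange_sub_le (p := p) hg hh ha hA hΛ haA hLA hgB hhB) ξ

end Differentiated

variable {ι κ : Type*} [Finite ι] {s : Finset κ} {σ : κ → ι → ι} {g : ι → V → ℂ}
  {a : κ → ι → V → ℝ} {L : ι → V →L[ℝ] ℂ} {p x : V} {N : ℕ} {A B Λ δ : ℝ}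

/-- An interior estimate on the segment from `p` to `x`: the zeroth order term `N • ∂^N g` created
by `N` differentiations has the good sign and absorbs both the potential `L` and the negative
part `δ` of the exchange coefficients. -/
theorem norm_iteratedFDeriv_le_of_euler_system (hN : 1 ≤ N) (hg : ∀ i, ContDiff ℝ ∞ (g i))
    (ha : ∀ i, ∀ y ∈ segment ℝ p x, ∀ k ∈ s, ContDiffAt ℝ N (a k i) y)
    (heq : ∀ i, ∀ y ∈ segment ℝ p x, ∀ᶠ z in 𝓝 y, fderiv ℝ (g i) z (z - p) =
      ∑ k ∈ s, a k i z • (g (σ k i) z - g i z) + L i (z - p) * g i z)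
    (hA : 0 ≤ A) (hB : 0 ≤ B) (hΛ : 0 ≤ Λ)
    (haA : ∀ i, ∀ y ∈ segment ℝ p x, ∀ k ∈ s, ∀ j, 1 ≤ j → j ≤ N →
      ‖iteratedFDeriv ℝ j (a k i) y‖ ≤ A * Λ ^ j)
    (hLA : ∀ i, ‖L i‖ ≤ A * Λ)
    (hgB : ∀ i, ∀ y ∈ segment ℝ p x, ∀ j < N, ‖iteratedFDeriv ℝ j (g i) y‖ ≤ B * Λ ^ j)
    (hδ : 0 ≤ δ) (haδ : ∀ i, ∀ y ∈ segment ℝ p x, ∀ k ∈ s, -δ ≤ a k i y)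
    (habsorb : ∀ i, ∀ y ∈ segment ℝ p x, 2 * (s.card * δ) + ‖L i (y - p)‖ ≤ 1 / 2) (i : ι) :
    ‖iteratedFDeriv ℝ N (g i) x‖ ≤
      2 * ((2 * s.card + 1) * ((2 ^ N - 1) * (A * B * Λ ^ N))) := by
  set Q := (2 * s.card + 1) * ((2 ^ N - 1) * (A * B * Λ ^ N))
  have hQ : 0 ≤ Q := by
    have : (0 : ℝ) ≤ 2 ^ N - 1 := sub_nonneg.2 (one_le_pow₀ one_le_two)
    positivity
  refine ContinuousMultilinearMap.opNorm_le_bound (by positivity) fun ξ => ?_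
  have hR : 0 ≤ Q * ∏ i, ‖ξ i‖ := by positivity
  have hpath : ∀ {t : ℝ}, t ∈ Set.Icc (0 : ℝ) 1 → p + t • (x - p) ∈ segment ℝ p x := fun ht =>
    segment_eq_image' ℝ p x ▸ Set.mem_image_of_mem _ ht
  set u : ι → ℝ → ℂ := fun i t => iteratedFDeriv ℝ N (g i) (p + t • (x - p)) ξ with hu_def
  set u' : ι → ℝ → ℂ := fun i t =>
    fderiv ℝ (fun z => iteratedFDeriv ℝ N (g i) z ξ) (p + t • (x - p)) (x - p) with hu'_def
  have hderiv : ∀ i t, HasDerivAt (u i) (u' i t) t := fun i t => by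
    have hline : HasDerivAt (fun t : ℝ => p + t • (x - p)) (x - p) t := by
      simpa using ((hasDerivAt_id t).smul_const (x - p)).const_add p
    exact ((contDiff_iteratedFDeriv_apply (hg i) ξ).differentiable (by simp)
      _).hasFDerivAt.comp_hasDerivAt t hline
  have hmax := le_of_forall_lt_neg_of_exchange (s := s) (σ := σ) (M := (2 * (Q * ∏ i, ‖ξ i‖)) ^ 2)
    (f := fun i t => ‖u i t‖ ^ 2) (a := fun k i t => |a k i (p + t • (x - p))|)
    (r := fun i t => ‖u i t‖ * (2 * (Q * ∏ i, ‖ξ i‖) - ‖u i t‖))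
    (fun i t => (hderiv i t).norm_sq) (fun _ _ _ _ _ => abs_nonneg _) (fun i t ht => ?_)
    (fun i t _ hM => ?_) i (Set.right_mem_Icc.2 zero_le_one)
  · simpa [hu_def, mul_assoc] using le_of_sq_le_sq hmax (by positivity)
  · have hy := hpath ht
    have hscale : t • u' i t = fderiv ℝ (fun z => iteratedFDeriv ℝ N (g i) z ξ)
        (p + t • (x - p)) (p + t • (x - p) - p) := by
      rw [add_sub_cancel_left, map_smul]
    rw [mul_left_comm, ← real_inner_smul_right, hscale]
    exact two_mul_inner_le_of_norm_sub_exchange_le hN hδ (haδ i _ hy) (habsorb i _ hy)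
      (norm_fderiv_iteratedFDeriv_apply_add_sub_le (hg i) (fun k => hg (σ k i)) (ha i _ hy)
        (heq i _ hy) hA hΛ (haA i _ hy) (hLA i) (hgB i _ hy) (fun k _ => hgB (σ k i) _ hy) ξ)
  · have hlt : 2 * (Q * ∏ i, ‖ξ i‖) < ‖u i t‖ := lt_of_pow_lt_pow_left₀ 2 (norm_nonneg _) hM
    exact mul_neg_of_pos_of_neg (by linarith) (by linarith)

end InteriorEstimate

section Holomorphic

open scoped ContDiff Topology

variable {V F : Type*} [NormedAddCommGroup V] [NormedSpace ℝ V]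
  [NormedAddCommGroup F] [NormedSpace ℂ F]

/-- Holomorphic functions on the complexification `V ⊗ ℂ`, encoded as smooth functions of the pair
`(l₁, l₂)` (standing for `l₁ + i l₂`) which satisfy the Cauchy–Riemann equations. -/
structure IsHolomorphicPair (f : V × V → F) : Prop where
  contDiff : ContDiff ℝ ∞ f
  fderiv_snd : ∀ (p : V × V) (η : V), fderiv ℝ f p (0, η) = Complex.I • fderiv ℝ f p (η, 0)

namespace IsHolomorphicPair

variable {f g : V × V → F}

theorem hasFDerivAt (hf : IsHolomorphicPair f) (p : V × V) : HasFDerivAt f (fderiv ℝ f p) p :=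
  (hf.contDiff.differentiable (by simp) p).hasFDerivAt

theorem contDiff_fderiv (hf : IsHolomorphicPair f) : ContDiff ℝ ∞ (fderiv ℝ f) :=
  hf.contDiff.fderiv_right (m := ∞) (by simp)

theorem fderiv_mk_apply (hf : IsHolomorphicPair f) (p v : V × V) :
    fderiv ℝ f p v = fderiv ℝ f p (v.1, 0) + Complex.I • fderiv ℝ f p (v.2, 0) := by
  rw [← hf.fderiv_snd, ← map_add]
  simp

theorem sub (hf : IsHolomorphicPair f) (hg : IsHolomorphicPair g) :
    IsHolomorphicPair (fun p => f p - g p) where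
  contDiff := hf.contDiff.sub hg.contDiff
  fderiv_snd p η := by
    rw [((hf.hasFDerivAt p).fun_sub (hg.hasFDerivAt p)).fderiv, sub_apply, sub_apply,
      hf.fderiv_snd, hg.fderiv_snd, smul_sub]

theorem const_smul (hf : IsHolomorphicPair f) (c : ℂ) : IsHolomorphicPair (fun p => c • f p) where
  contDiff := contDiff_const.smul hf.contDiff
  fderiv_snd p η := by
    rw [((hf.hasFDerivAt p).fun_const_smul c).fderiv, smul_apply, smul_apply, hf.fderiv_snd,
      smul_comm]

theorem fderiv_apply_fst (hf : IsHolomorphicPair f) (η : V) :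
    IsHolomorphicPair (fun p => fderiv ℝ f p (η, 0)) := by
  refine ⟨hf.contDiff_fderiv.clm_apply contDiff_const, fun p ζ => ?_⟩
  have hsymm : IsSymmSndFDerivAt ℝ f p := hf.contDiff.contDiffAt.isSymmSndFDerivAt (by
    simpa using WithTop.coe_le_coe.2 (le_top (a := (2 : ℕ∞))))
  have happly : ∀ v, HasFDerivAt (fun q => fderiv ℝ f q v) ((fderiv ℝ (fderiv ℝ f) p).flip v) p :=
    fun v => by
      simpa using ((hf.contDiff_fderiv.differentiable (by simp) p).hasFDerivAt).clm_apply
        (hasFDerivAt_const v p)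
  have hCR := (happly (0, ζ)).fderiv
  simp only [hf.fderiv_snd] at hCR
  rw [((happly (ζ, 0)).fun_const_smul Complex.I).fderiv] at hCR
  have hCRη := congrArg (fun L : V × V →L[ℝ] F => L (η, 0)) hCR
  simp only [smul_apply, ContinuousLinearMap.flip_apply] at hCRη
  rw [(happly (η, 0)).fderiv, ContinuousLinearMap.flip_apply, ContinuousLinearMap.flip_apply,
    hsymm, ← hCRη, hsymm]

theorem fderiv_apply (hf : IsHolomorphicPair f) (v : V × V) :
    IsHolomorphicPair (fun p => fderiv ℝ f p v) := by
  have hv : (fun p => fderiv ℝ f p v) =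
      fun p => fderiv ℝ f p (v.1, 0) - (-Complex.I) • fderiv ℝ f p (v.2, 0) := by
    funext p
    rw [hf.fderiv_mk_apply, neg_smul, sub_neg_eq_add]
  rw [hv]
  exact (hf.fderiv_apply_fst v.1).sub ((hf.fderiv_apply_fst v.2).const_smul _)

theorem fderiv_comp_mk_left (hf : IsHolomorphicPair f) (p : V × V) (η : V) :
    fderiv ℝ (fun l => f (l, p.2)) p.1 η = fderiv ℝ f p (η, 0) := by
  have h : HasFDerivAt (fun l => f (l, p.2)) _ p.1 :=
    (hf.hasFDerivAt p).comp p.1 (hasFDerivAt_prodMk_left p.1 p.2)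
  simp [h.fderiv]

theorem contDiff_comp_mk_left (hf : IsHolomorphicPair f) (m : V) :
    ContDiff ℝ ∞ (fun l => f (l, m)) :=
  hf.contDiff.comp (by fun_prop)

theorem iteratedFDeriv_fst (hf : IsHolomorphicPair f) {M : ℕ} (η : Fin M → V) :
    IsHolomorphicPair (fun p => iteratedFDeriv ℝ M (fun l => f (l, p.2)) p.1 η) := by
  induction M with
  | zero => simpa using hf
  | succ M ih =>
    simpa only [iteratedFDeriv_succ_apply_eq_fderiv (hf.contDiff_comp_mk_left _),
      ← (ih (Fin.tail η)).fderiv_comp_mk_left] using (ih (Fin.tail η)).fderiv_apply_fst (η 0)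

theorem hasDerivAt_line (hf : IsHolomorphicPair f) (p : V × V) (η : V) (z : ℂ) :
    HasDerivAt (fun z : ℂ => f (p + (z.re • η, z.im • η)))
      (fderiv ℝ f (p + (z.re • η, z.im • η)) (η, 0)) z := by
  let L : ℂ →L[ℝ] V × V := (Complex.reCLM.smulRight η).prod (Complex.imCLM.smulRight η)
  have hL : HasFDerivAt (fun z : ℂ => p + (z.re • η, z.im • η)) L z :=
    (L.hasFDerivAt (x := z)).const_add p
  rw [hasDerivAt_iff_hasFDerivAt]
  refine hasFDerivAt_of_restrictScalars ℝ ((hf.hasFDerivAt _).comp z hL) ?_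
  ext w
  have hw : L w = (w.re • η, w.im • η) := rfl
  have hscale : ∀ c : ℝ, ((c • η, 0) : V × V) = c • (η, 0) := by simp
  rw [ContinuousLinearMap.comp_apply, hw, hf.fderiv_mk_apply _ (w.re • η, w.im • η), hscale, hscale,
    map_smul, map_smul, ← Complex.coe_smul, ← Complex.coe_smul, smul_smul, ← add_smul,
    mul_comm Complex.I, Complex.re_add_im]
  rfl

theorem norm_fderiv_apply_le (hf : IsHolomorphicPair f) {p : V × V} {s B : ℝ} (hs : 0 < s)
    (hB : ∀ q ∈ Metric.closedBall p s, ‖f q‖ ≤ B) (η : V) :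
    ‖fderiv ℝ f p (η, 0)‖ ≤ B / s * ‖η‖ := by
  rcases eq_or_ne η 0 with rfl | hη
  · rw [Prod.mk_zero_zero, map_zero]
    simp
  have hη' : 0 < ‖η‖ := norm_pos_iff.2 hη
  have hderiv := hf.hasDerivAt_line p η 0
  simp only [Complex.zero_re, Complex.zero_im, zero_smul, Prod.mk_zero_zero, add_zero] at hderiv
  rw [← hderiv.deriv]
  refine (Complex.norm_deriv_le_of_forall_mem_sphere_norm_le (div_pos hs hη')
    (Differentiable.diffContOnCl fun z => (hf.hasDerivAt_line p η z).differentiableAt)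
    fun z hz => hB _ ?_).trans_eq
      ((div_div_eq_mul_div _ _ _).trans (div_mul_eq_mul_div _ _ _).symm)
  have hz' : ‖z‖ * ‖η‖ = s := by
    rw [mem_sphere_zero_iff_norm.1 hz, div_mul_cancel₀ _ hη'.ne']
  rw [mem_closedBall_iff_norm, add_sub_cancel_left, Prod.norm_mk, norm_smul, norm_smul, ← hz']
  exact max_le (by gcongr; exact Complex.abs_re_le_norm z)
    (by gcongr; exact Complex.abs_im_le_norm z)

theorem norm_iteratedFDeriv_le (hf : IsHolomorphicPair f) {M : ℕ} {p : V × V} {s B : ℝ}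
    (hs : 0 < s) (hB : ∀ q ∈ Metric.closedBall p (M * s), ‖f q‖ ≤ B) (η : Fin M → V) :
    ‖iteratedFDeriv ℝ M (fun l => f (l, p.2)) p.1 η‖ ≤ B / s ^ M * ∏ i, ‖η i‖ := by
  induction M generalizing p with
  | zero => simpa using hB p (by simp)
  | succ M ih =>
    rw [iteratedFDeriv_succ_apply_eq_fderiv (hf.contDiff_comp_mk_left _),
      (hf.iteratedFDeriv_fst (Fin.tail η)).fderiv_comp_mk_left]
    refine ((hf.iteratedFDeriv_fst (Fin.tail η)).norm_fderiv_apply_le hs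
      (fun q hq => ih (fun q' hq' => hB q' ?_) (Fin.tail η)) (η 0)).trans_eq ?_
    · refine Metric.closedBall_subset_closedBall' ?_ hq'
      have := Metric.mem_closedBall.1 hq
      push_cast
      linarith
    · rw [Fin.prod_univ_succ, pow_succ']
      simp only [Fin.tail]
      field_simp

theorem norm_fderiv_le (hf : IsHolomorphicPair f) {p : V × V} {s B : ℝ} (hs : 0 < s)
    (hB : ∀ q ∈ Metric.closedBall p s, ‖f q‖ ≤ B) : ‖fderiv ℝ f p‖ ≤ 2 * (B / s) := by
  have hB0 : 0 ≤ B := (norm_nonneg _).trans (hB p (Metric.mem_closedBall_self hs.le))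
  refine ContinuousLinearMap.opNorm_le_bound _ (by positivity) fun v => ?_
  calc ‖fderiv ℝ f p v‖ = ‖fderiv ℝ f p (v.1, 0) + Complex.I • fderiv ℝ f p (v.2, 0)‖ := by
        rw [← hf.fderiv_mk_apply]
    _ ≤ ‖fderiv ℝ f p (v.1, 0)‖ + ‖fderiv ℝ f p (v.2, 0)‖ :=
        (norm_add_le _ _).trans_eq (by simp [norm_smul])
    _ ≤ B / s * ‖v.1‖ + B / s * ‖v.2‖ :=
        add_le_add (hf.norm_fderiv_apply_le hs hB _) (hf.norm_fderiv_apply_le hs hB _)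
    _ ≤ B / s * ‖v‖ + B / s * ‖v‖ := by
        gcongr
        exacts [norm_fst_le v, norm_snd_le v]
    _ = 2 * (B / s) * ‖v‖ := by ring

section Limit

variable {ι : Type*} {l : Filter ι} {G : ι → V × V → F}

theorem uniformCauchySeqOn_fderiv (hG : ∀ n, IsHolomorphicPair (G n))
    (hlim : ∀ R, TendstoUniformlyOn G f l (Metric.closedBall 0 R)) (R : ℝ) :
    UniformCauchySeqOn (fun n => fderiv ℝ (G n)) l (Metric.closedBall 0 R) := by
  intro u hu
  obtain ⟨ε, hε, hεu⟩ := Metric.mem_uniformity_dist.1 hu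
  have hcauchy := (hlim (R + 1)).uniformCauchySeqOn _
    (Metric.dist_mem_uniformity (half_pos (half_pos hε)))
  filter_upwards [hcauchy] with n hn p hp
  apply hεu
  rw [dist_eq_norm, ← (((hG n.1).hasFDerivAt p).fun_sub ((hG n.2).hasFDerivAt p)).fderiv]
  refine (((hG n.1).sub (hG n.2)).norm_fderiv_le one_pos (B := ε / 2 / 2) fun q hq => ?_).trans_lt
    (by linarith)
  have hqR : q ∈ Metric.closedBall (0 : V × V) (R + 1) := by
    rw [mem_closedBall_zero_iff] at hp ⊢
    rw [mem_closedBall_iff_norm] at hq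
    linarith [norm_le_norm_add_norm_sub' q p]
  rw [← dist_eq_norm]
  exact (hn q hqR).le

variable [CompleteSpace F] [l.NeBot]

theorem tendstoUniformlyOn_fderiv (hG : ∀ n, IsHolomorphicPair (G n))
    (hlim : ∀ R, TendstoUniformlyOn G f l (Metric.closedBall 0 R)) :
    Differentiable ℝ f ∧ ∀ R,
      TendstoUniformlyOn (fun n => fderiv ℝ (G n)) (fderiv ℝ f) l (Metric.closedBall 0 R) := by
  have hcauchy := uniformCauchySeqOn_fderiv hG hlim
  have hmem : ∀ p : V × V, p ∈ Metric.closedBall (0 : V × V) ‖p‖ := fun p => by simp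
  have hex : ∀ p, ∃ L, Filter.Tendsto (fun n => fderiv ℝ (G n) p) l (𝓝 L) := fun p =>
    cauchy_map_iff_exists_tendsto.1 ((hcauchy ‖p‖).cauchy_map (hmem p))
  choose f' hf' using hex
  have hunif : ∀ R, TendstoUniformlyOn (fun n => fderiv ℝ (G n)) f' l (Metric.closedBall 0 R) :=
    fun R => (hcauchy R).tendstoUniformlyOn_of_tendsto fun p _ => hf' p
  have hderiv : ∀ p, HasFDerivAt f (f' p) p := fun p =>
    hasFDerivAt_of_tendstoUniformlyOn (Metric.isOpen_ball (x := (0 : V × V)) (ε := ‖p‖ + 1))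
      ((hunif (‖p‖ + 1)).mono Metric.ball_subset_closedBall) (fun n q _ => (hG n).hasFDerivAt q)
      (fun q _ => (hlim ‖q‖).tendsto_at (hmem q)) (by simp)
  rw [show fderiv ℝ f = f' from funext fun p => (hderiv p).fderiv]
  exact ⟨fun p => (hderiv p).differentiableAt, hunif⟩

theorem contDiff_of_tendstoUniformlyOn [FiniteDimensional ℝ V] (hG : ∀ n, IsHolomorphicPair (G n))
    (hlim : ∀ R, TendstoUniformlyOn G f l (Metric.closedBall 0 R)) (m : ℕ) :
    ContDiff ℝ m f := by
  induction m generalizing G f with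
  | zero => exact contDiff_zero.2 (tendstoUniformlyOn_fderiv hG hlim).1.continuous
  | succ m ih =>
    obtain ⟨hdiff, hlim'⟩ := tendstoUniformlyOn_fderiv hG hlim
    rw [Nat.cast_succ, contDiff_succ_iff_fderiv_apply]
    exact ⟨hdiff, by simp, fun v => ih (fun n => (hG n).fderiv_apply v) fun R =>
      (ContinuousLinearMap.apply ℝ F v).uniformContinuous.comp_tendstoUniformlyOn (hlim' R)⟩

theorem of_tendstoUniformlyOn [FiniteDimensional ℝ V] (hG : ∀ n, IsHolomorphicPair (G n))
    (hlim : ∀ R, TendstoUniformlyOn G f l (Metric.closedBall 0 R)) : IsHolomorphicPair f := by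
  refine ⟨contDiff_infty.2 (contDiff_of_tendstoUniformlyOn hG hlim), fun p η => ?_⟩
  have hfderiv : Filter.Tendsto (fun n => fderiv ℝ (G n) p) l (𝓝 (fderiv ℝ f p)) :=
    ((tendstoUniformlyOn_fderiv hG hlim).2 ‖p‖).tendsto_at (by simp)
  have happly : ∀ v, Filter.Tendsto (fun n => fderiv ℝ (G n) p v) l (𝓝 (fderiv ℝ f p v)) :=
    fun v => ((ContinuousLinearMap.apply ℝ F v).continuous.tendsto _).comp hfderiv
  refine tendsto_nhds_unique (happly (0, η)) ?_
  simpa only [(hG _).fderiv_snd] using (happly (η, 0)).const_smul Complex.I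

end Limit

end IsHolomorphicPair

end Holomorphic

section WeylGroup

open scoped Topology

variable {V : Type*} [NormedAddCommGroup V] [InnerProductSpace ℝ V]

theorem reflection_orthogonal_span_singleton_apply (α x : V) :
    (ℝ ∙ α)ᗮ.reflection x = rRefl α x := by
  rw [Submodule.reflection_orthogonal_apply, Submodule.reflection_singleton_apply, rRefl, coroot,
    real_inner_smul_left, real_inner_self_eq_norm_sq, neg_sub, ← Nat.cast_smul_eq_nsmul ℝ,
    smul_smul]
  congr 2
  simp only [RCLike.ofReal_real_eq_id, id_eq, Nat.cast_ofNat]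
  ring

theorem rRefl_rRefl (α x : V) : rRefl α (rRefl α x) = x := by
  rw [← reflection_orthogonal_span_singleton_apply, ← reflection_orthogonal_span_singleton_apply,
    Submodule.reflection_reflection]

theorem inner_rRefl_self (α x : V) : ⟪α, rRefl α x⟫ = -⟪α, x⟫ := by
  rcases eq_or_ne α 0 with rfl | hα
  · simp only [inner_zero_left, neg_zero]
  have h : ⟪α, α⟫ ≠ 0 := inner_self_ne_zero.2 hα
  rw [rRefl, coroot, inner_sub_right, real_inner_smul_right, real_inner_smul_left]
  field_simp
  ring

theorem continuous_rRefl (α : V) : Continuous (rRefl α) := by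
  unfold rRefl
  fun_prop

variable {D : HOData V}

/-- The reflection in the root `α` as an element of the Weyl group, with value `1` when `α` is not
a root. -/
def weylRefl (D : HOData V) (α : V) : weylGroup D :=
  if h : α ∈ D.R then
    ⟨(ℝ ∙ α)ᗮ.reflection,
      Subgroup.subset_closure ⟨α, h, reflection_orthogonal_span_singleton_apply α⟩⟩
  else 1

theorem weylRefl_apply {α : V} (hα : α ∈ D.R) (x : V) : (weylRefl D α).1 x = rRefl α x := by
  rw [weylRefl, dif_pos hα]
  exact reflection_orthogonal_span_singleton_apply α x

theorem weylRefl_mul_apply {α : V} (hα : α ∈ D.R) (w : weylGroup D) (x : V) :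
    (weylRefl D α * w).1 x = rRefl α (w.1 x) := weylRefl_apply hα (w.1 x)

theorem weylGroup_apply_mem (w : weylGroup D) {α : V} (hα : α ∈ D.R) : w.1 α ∈ D.R := by
  have image_eq : ∀ w ∈ weylGroup D, w '' (D.R : Set V) = D.R := fun w hw => by
    rw [weylGroup] at hw
    induction hw using Subgroup.closure_induction with
    | mem v hv =>
      obtain ⟨β, hβ, hv⟩ := hv
      have hinv : ∀ x, v (v x) = x := fun x => by rw [hv, hv, rRefl_rRefl]
      have hmaps : ∀ γ ∈ D.R, v γ ∈ D.R := fun γ hγ => hv γ ▸ D.refl_mem β hβ γ hγ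
      exact Set.Subset.antisymm (Set.image_subset_iff.2 hmaps) fun γ hγ =>
        ⟨v γ, hmaps γ hγ, hinv γ⟩
    | one => exact Set.image_id _
    | mul a b _ _ ha hb => rw [LinearIsometryEquiv.coe_mul, Set.image_comp, hb, ha]
    | inv a _ ha =>
      conv_lhs => rw [← ha, ← Set.image_comp]
      exact (Set.image_congr fun x _ => a.symm_apply_apply x).trans (Set.image_id _)
  have hmem : w.1 α ∈ w.1 '' (D.R : Set V) := Set.mem_image_of_mem _ hα
  rwa [image_eq w.1 w.2] at hmem

theorem inner_weyl_apply (w : weylGroup D) (x y : V) : ⟪x, w.1 y⟫ = ⟪w⁻¹.1 x, y⟫ := by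
  rw [← w.1.inner_map_map (w⁻¹.1 x) y]
  exact congrArg (⟪·, w.1 y⟫) (w.1.apply_symm_apply x).symm

theorem norm_weyl_apply (w : weylGroup D) (x : V) : ‖w.1 x‖ = ‖x‖ := w.1.norm_map x

theorem exists_eventually_hoRegular (D : HOData V) (x : V) :
    ∃ u : V, ∀ᶠ s in 𝓝[≠] (0 : ℝ), HORegular D (x + s • u) := by
  obtain ⟨u, hu⟩ := D.pos_char
  have hne : ∀ α ∈ D.R, ⟪α, u⟫ ≠ 0 := fun α hα => by
    rcases D.pos_or_neg α hα with h | h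
    · exact ((hu α hα).1 h).ne'
    · exact (neg_pos.1 (inner_neg_left α u (𝕜 := ℝ) ▸ (hu _ (D.neg_mem α hα)).1 h)).ne
  refine ⟨u, (Finset.eventually_all D.R).2 fun α hα => ?_⟩
  have hs : ∀ᶠ s in 𝓝[≠] (0 : ℝ), s ≠ -⟪α, x⟫ / ⟪α, u⟫ := by
    rcases eq_or_ne 0 (-⟪α, x⟫ / ⟪α, u⟫) with h0 | h0
    · exact h0 ▸ self_mem_nhdsWithin
    · exact nhdsWithin_le_nhds (isOpen_ne.mem_nhds h0)
  filter_upwards [hs] with s hs h0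
  rw [inner_add_right, real_inner_smul_right] at h0
  exact hs ((eq_div_iff (hne α hα)).2 (by linarith))

theorem eq_of_forall_hoRegular_eq {X : Type*} [TopologicalSpace X] [T2Space X] (D : HOData V)
    {x : V} {f g : V → X} (hf : ContinuousAt f x) (hg : ContinuousAt g x)
    (h : ∀ y, HORegular D y → f y = g y) : f x = g x := by
  obtain ⟨u, hu⟩ := exists_eventually_hoRegular D x
  have hlim : Filter.Tendsto (fun s : ℝ => x + s • u) (𝓝[≠] 0) (𝓝 x) := by
    have hcont : Continuous fun s : ℝ => x + s • u := by fun_prop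
    simpa using (hcont.tendsto 0).mono_left nhdsWithin_le_nhds
  refine tendsto_nhds_unique (hf.tendsto.comp hlim) ((hg.tendsto.comp hlim).congr' ?_)
  filter_upwards [hu] with s hs using (h _ hs).symm

end WeylGroup

section CherednikSystem

open scoped ContDiff Topology

variable {V : Type*} [NormedAddCommGroup V] [InnerProductSpace ℝ V] {D : HOData V}

/-- The coefficients of the Cherednik system contracted with the Euler field `z ↦ z - p`. For the
roots vanishing at `p` the Euler field cancels the pole of the Cherednik kernel. -/
def eulerCoeff (D : HOData V) (p α z : V) : ℝ :=
  D.k α * if ⟪α, p⟫ = 0 then toddFun ⟪α, z⟫ else ⟪α, z - p⟫ * cherednikKernel ⟪α, z⟫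

theorem eulerCoeff_of_inner_ne_zero (p : V) {α z : V} (hz : ⟪α, z⟫ ≠ 0) :
    eulerCoeff D p α z = D.k α * (⟪α, z - p⟫ * cherednikKernel ⟪α, z⟫) := by
  rw [eulerCoeff]
  split_ifs with hp
  · rw [inner_sub_right, hp, sub_zero, mul_cherednikKernel hz]
  · rfl

theorem eulerCoeff_nonneg {p α z : V} (hα : α ∈ D.R) (hp : ⟪α, p⟫ = 0) :
    0 ≤ eulerCoeff D p α z := by
  rw [eulerCoeff, if_pos hp]
  exact mul_nonneg (D.k_pos α hα).le (toddFun_pos _).le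

theorem contDiffAt_eulerCoeff {p α z : V} (h : ⟪α, p⟫ = 0 ∨ ⟪α, z⟫ ≠ 0) :
    ContDiffAt ℝ ∞ (eulerCoeff D p α) z := by
  have hinner : ∀ v : V, ContDiff ℝ ∞ fun z => ⟪α, z - v⟫ := fun v =>
    contDiff_const.inner ℝ (contDiff_id.sub contDiff_const)
  have hinner₀ : ContDiff ℝ ∞ fun z => ⟪α, z⟫ := contDiff_const.inner ℝ contDiff_id
  unfold eulerCoeff
  by_cases hp : ⟪α, p⟫ = 0
  · simp only [hp, if_true]
    exact (contDiff_const.mul (contDiff_toddFun.comp hinner₀)).contDiffAt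
  · simp only [hp, if_false]
    exact contDiffAt_const.mul ((hinner p).contDiffAt.mul
      (ContDiffAt.comp (f := fun z => ⟪α, z⟫) z
        (contDiffAt_cherednikKernel (h.resolve_left hp)) hinner₀.contDiffAt))

variable {K : Type*} [NormedField K] [NormedAlgebra ℝ K]

/-- The Cherednik differential-difference system with an arbitrary real linear zeroth order term
`χ`, which covers real and complex spectral parameters at once. -/
structure IsCherednikSolution (D : HOData V) (χ : V →L[ℝ] K) (G : V → K) : Prop where
  contDiff : ContDiff ℝ ∞ G
  fderiv_apply : ∀ x, HORegular D x → ∀ ξ, fderiv ℝ G x ξ =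
    ∑ α ∈ D.Rpos, (D.k α * ⟪α, ξ⟫ * cherednikKernel ⟪α, x⟫) • (G (rRefl α x) - G x) + χ ξ * G x

namespace IsCherednikSolution

variable {χ : V →L[ℝ] K} {G : V → K}

theorem fderiv_euler (hG : IsCherednikSolution D χ G) {p z : V}
    (h : ∀ α ∈ D.Rpos, ⟪α, p⟫ = 0 ∨ ⟪α, z⟫ ≠ 0) :
    fderiv ℝ G z (z - p) =
      ∑ α ∈ D.Rpos, eulerCoeff D p α z • (G (rRefl α z) - G z) + χ (z - p) * G z := by
  have hGc : Continuous G := hG.contDiff.continuous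
  have hG' : Continuous (fderiv ℝ G) := hG.contDiff.continuous_fderiv (by simp)
  refine eq_of_forall_hoRegular_eq D (f := fun z => fderiv ℝ G z (z - p))
    (g := fun z => ∑ α ∈ D.Rpos, eulerCoeff D p α z • (G (rRefl α z) - G z) + χ (z - p) * G z)
    (hG'.clm_apply (by fun_prop)).continuousAt ?_ fun y hy => ?_
  · have hχ : Continuous fun z => χ (z - p) * G z := by fun_prop
    exact (tendsto_finsetSum _ fun α hα => (contDiffAt_eulerCoeff (h α hα)).continuousAt.smul
      ((hGc.comp (continuous_rRefl α)).sub hGc).continuousAt).add hχ.continuousAt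
  · rw [hG.fderiv_apply y hy]
    congr 1
    refine Finset.sum_congr rfl fun α hα => ?_
    rw [eulerCoeff_of_inner_ne_zero p (hy α (D.pos_subset hα)), mul_assoc]

theorem fderiv_euler_comp_weyl (hG : IsCherednikSolution D χ G) (w : weylGroup D) {p z : V}
    (h : ∀ α ∈ D.Rpos, ⟪α, w.1 p⟫ = 0 ∨ ⟪α, w.1 z⟫ ≠ 0) :
    fderiv ℝ (fun y => G (w.1 y)) z (z - p) =
      ∑ α ∈ D.Rpos, eulerCoeff D (w.1 p) α (w.1 z) • (G ((weylRefl D α * w).1 z) - G (w.1 z)) +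
        χ (w.1 (z - p)) * G (w.1 z) := by
  have hchain : fderiv ℝ (fun y => G (w.1 y)) z (z - p) = fderiv ℝ G (w.1 z) (w.1 z - w.1 p) := by
    rw [← map_sub]
    exact congrArg (fun L : V →L[ℝ] K => L (z - p)) <|
      ((hG.contDiff.differentiable (by simp) (w.1 z)).hasFDerivAt.comp z
        w.1.toContinuousLinearEquiv.hasFDerivAt).fderiv
  rw [hchain, hG.fderiv_euler h, map_sub w.1]
  congr 1
  refine Finset.sum_congr rfl fun α hα => ?_
  rw [weylRefl_mul_apply (D.pos_subset hα)]

end IsCherednikSolution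

/-- The complex linear form `ξ ↦ (ρ + λ, ξ)` for the spectral parameter `λ = l₁ + i l₂`. -/
def spectralForm (D : HOData V) (l₁ l₂ : V) : V →L[ℝ] ℂ :=
  Complex.ofRealCLM ∘L innerSL ℝ (rhoHO D + l₁) +
    Complex.I • (Complex.ofRealCLM ∘L innerSL ℝ l₂)

theorem spectralForm_apply (l₁ l₂ ξ : V) : spectralForm D l₁ l₂ ξ =
    ((⟪rhoHO D + l₁, ξ⟫ : ℝ) : ℂ) + Complex.I * ((⟪l₂, ξ⟫ : ℝ) : ℂ) := rfl

theorem IsOpdamR.isCherednikSolution {l : V} {G : V → ℝ} (hG : IsOpdamR D l G) :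
    IsCherednikSolution D (innerSL ℝ (rhoHO D + l)) G where
  contDiff := contDiff_iff_contDiffAt.2 fun x => (hG.1 x (Set.mem_univ x)).contDiffAt
  fderiv_apply x hx ξ := hG.2.2 ξ x hx

theorem IsOpdamC.isCherednikSolution {l₁ l₂ : V} {G : V → ℂ} (hG : IsOpdamC D l₁ l₂ G) :
    IsCherednikSolution D (spectralForm D l₁ l₂) G where
  contDiff := contDiff_iff_contDiffAt.2 fun x => (hG.1 x (Set.mem_univ x)).contDiffAt
  fderiv_apply x hx ξ := by
    simp only [hG.2.2 ξ x hx, spectralForm_apply, Complex.real_smul, cherednikKernel,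
      div_eq_mul_inv]

end CherednikSystem

section AdaptedCenter

variable {V : Type*} [NormedAddCommGroup V] [InnerProductSpace ℝ V]

/- Pigeonhole: shrink the scale by `κ` as long as some value falls into the gap `(κ τ, τ]`; each
step removes at least one value from below the scale. -/
theorem exists_scale_gap {ι : Type*} (s : Finset ι) (f : ι → ℝ) {κ : ℝ} (hκ : 0 < κ) (hκ1 : κ ≤ 1)
    (n : ℕ) {r : ℝ} (hr : 0 < r) (hcard : (s.filter fun i => f i ≤ r).card ≤ n) :
    ∃ τ, κ ^ n * r ≤ τ ∧ τ ≤ r ∧ ∀ i ∈ s, f i ≤ κ * τ ∨ τ < f i := by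
  induction n generalizing r with
  | zero =>
    rw [Nat.le_zero, Finset.card_eq_zero, Finset.filter_eq_empty_iff] at hcard
    exact ⟨r, by simp, le_rfl, fun i hi => Or.inr (not_le.1 (hcard hi))⟩
  | succ n ih =>
    by_cases hgap : ∀ i ∈ s, f i ≤ κ * r ∨ r < f i
    · exact ⟨r, mul_le_of_le_one_left hr.le (pow_le_one₀ hκ.le hκ1), le_rfl, hgap⟩
    push Not at hgap
    obtain ⟨i, hi, hlow, hup⟩ := hgap
    have hle : κ * r ≤ r := mul_le_of_le_one_left hr.le hκ1
    have hlt : (s.filter fun i => f i ≤ κ * r).card < (s.filter fun i => f i ≤ r).card :=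
      Finset.card_lt_card <| Finset.ssubset_iff_of_subset
        (Finset.monotone_filter_right s fun _ _ h => h.trans hle) |>.2
        ⟨i, Finset.mem_filter.2 ⟨hi, hup⟩, fun h => hlow.not_ge (Finset.mem_filter.1 h).2⟩
    obtain ⟨τ, hτ, hτr, h⟩ := ih (mul_pos hκ hr) (by omega)
    exact ⟨τ, by rwa [pow_succ, mul_assoc], hτr.trans hle, h⟩

theorem exists_norm_sub_le_of_forall_abs_inner_le (S : Finset V) :
    ∃ C : ℝ, 0 ≤ C ∧ ∀ (x : V) (δ : ℝ), 0 ≤ δ → (∀ α ∈ S, |⟪α, x⟫| ≤ δ) →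
      ∃ p, (∀ α ∈ S, ⟪α, p⟫ = 0) ∧ ‖x - p‖ ≤ C * δ := by
  let T : V →ₗ[ℝ] (S → ℝ) := LinearMap.pi fun α => (innerSL ℝ (α : V)).toLinearMap
  obtain ⟨g, hg⟩ := T.rangeRestrict.exists_rightInverse_of_surjective T.range_rangeRestrict
  let gc := LinearMap.toContinuousLinearMap g
  refine ⟨‖gc‖, gc.opNorm_nonneg, fun x δ hδ hx => ?_⟩
  have hTg : T (g (T.rangeRestrict x)) = T x :=
    congrArg Subtype.val (LinearMap.congr_fun hg (T.rangeRestrict x))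
  refine ⟨x - g (T.rangeRestrict x), fun α hα => ?_, ?_⟩
  · have hα' : ⟪α, g (T.rangeRestrict x)⟫ = ⟪α, x⟫ := congrFun hTg ⟨α, hα⟩
    rw [inner_sub_right, hα', sub_self]
  · have hT : ‖T.rangeRestrict x‖ ≤ δ := (pi_norm_le_iff_of_nonneg hδ).2 fun α => hx α α.2
    rw [sub_sub_cancel]
    exact (gc.le_opNorm _).trans (mul_le_mul_of_nonneg_left hT gc.opNorm_nonneg)

theorem exists_center_at_scale (S : Finset V) {η : ℝ} (hη : 0 < η) :
    ∃ c : ℝ, 0 < c ∧ ∀ r : ℝ, 0 < r → ∀ x : V, ∃ p τ, c * r ≤ τ ∧ τ ≤ r ∧ ‖x - p‖ ≤ η * τ ∧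
      ∀ α ∈ S, ⟪α, p⟫ = 0 ∨ τ < |⟪α, x⟫| := by
  choose C hC₀ hC using exists_norm_sub_le_of_forall_abs_inner_le (V := V)
  set C' := ∑ T ∈ S.powerset, C T
  have hC' : 0 ≤ C' := Finset.sum_nonneg fun T _ => hC₀ T
  set κ := min 1 (η / (C' + 1))
  have hκ : 0 < κ := lt_min one_pos (by positivity)
  refine ⟨κ ^ S.card, by positivity, fun r hr x => ?_⟩
  obtain ⟨τ, hcτ, hτr, hgap⟩ := exists_scale_gap S (fun α => |⟪α, x⟫|) hκ (min_le_left _ _) S.card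
    hr (Finset.card_filter_le _ _)
  have hτ : 0 < τ := lt_of_lt_of_le (by positivity) hcτ
  set T := S.filter fun α => |⟪α, x⟫| ≤ κ * τ
  have hCT : C T ≤ C' := Finset.single_le_sum (f := C) (fun T _ => hC₀ T)
    (Finset.mem_powerset.2 (Finset.filter_subset _ _))
  obtain ⟨p, hp, hxp⟩ := hC T x (κ * τ) (by positivity) fun α hα => (Finset.mem_filter.1 hα).2
  refine ⟨p, τ, hcτ, hτr, hxp.trans ?_, fun α hα =>
    (hgap α hα).imp_left fun h => hp α (Finset.mem_filter.2 ⟨hα, h⟩)⟩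
  calc C T * (κ * τ) ≤ (C' + 1) * (η / (C' + 1) * τ) := by
        gcongr
        · linarith
        · exact min_le_right _ _
    _ = η * τ := by field_simp

/-- The point `p` is a good centre for the Euler field near `y` at scale `τ`: it is much closer to
`y` than `τ`, and every root hyperplane avoiding `p` has distance of order at least `τ` from `y`. -/
structure IsAdapted (D : HOData V) (η τ : ℝ) (p y : V) : Prop where
  norm_sub_le : ‖y - p‖ ≤ η * τ
  inner_eq_zero_or_le : ∀ α ∈ D.R, ⟪α, p⟫ = 0 ∨ τ / 2 ≤ |⟪α, y⟫|

variable {D : HOData V} {η τ : ℝ} {p y : V}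

theorem IsAdapted.weyl_apply (h : IsAdapted D η τ p y) (w : weylGroup D) :
    IsAdapted D η τ (w.1 p) (w.1 y) where
  norm_sub_le := by rw [← map_sub, norm_weyl_apply]; exact h.norm_sub_le
  inner_eq_zero_or_le α hα := by
    rw [inner_weyl_apply, inner_weyl_apply]
    exact h.inner_eq_zero_or_le _ (weylGroup_apply_mem w⁻¹ hα)

theorem exists_forall_segment_isAdapted (hη : 0 < η) (hηD : ∀ α ∈ D.R, ‖α‖ * η ≤ 1 / 2) :
    ∃ c : ℝ, 0 < c ∧ ∀ r : ℝ, 0 < r → ∀ x : V, ∃ p τ, c * r ≤ τ ∧ τ ≤ r ∧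
      ∀ y ∈ segment ℝ p x, IsAdapted D η τ p y := by
  obtain ⟨c, hc, h⟩ := exists_center_at_scale D.R hη
  refine ⟨c, hc, fun r hr x => ?_⟩
  obtain ⟨p, τ, hcτ, hτr, hxp, hroots⟩ := h r hr x
  have hτ : 0 < τ := lt_of_lt_of_le (by positivity) hcτ
  refine ⟨p, τ, hcτ, hτr, fun y hy => ⟨(norm_sub_le_of_mem_segment hy).trans hxp,
    fun α hα => (hroots α hα).imp_right fun hx => ?_⟩⟩
  have hyx : ‖x - y‖ ≤ η * τ := by
    rw [norm_sub_rev]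
    exact (norm_sub_le_of_mem_segment (segment_symm ℝ p x ▸ hy)).trans (norm_sub_rev x p ▸ hxp)
  have hα' : |⟪α, x⟫ - ⟪α, y⟫| ≤ 1 / 2 * τ := calc
    |⟪α, x⟫ - ⟪α, y⟫| ≤ ‖α‖ * ‖x - y‖ := by
      rw [← inner_sub_right]
      exact abs_real_inner_le_norm _ _
    _ ≤ ‖α‖ * η * τ := by rw [mul_assoc]; gcongr
    _ ≤ 1 / 2 * τ := by gcongr; exact hηD α hα
  linarith [abs_sub_abs_le_abs_sub ⟪α, x⟫ ⟪α, y⟫]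

end AdaptedCenter

section MaxW

variable {V : Type*} [NormedAddCommGroup V] [InnerProductSpace ℝ V] (D : HOData V)
  [Fintype (weylGroup D)]

theorem inner_weyl_le_maxW (w : weylGroup D) (l x : V) : ⟪w.1 l, x⟫ ≤ maxW D l x :=
  le_ciSup (f := fun w : weylGroup D => ⟪w.1 l, x⟫) (Set.finite_range _).bddAbove w

theorem inner_weyl_right_le_maxW (w : weylGroup D) (l x : V) : ⟪l, w.1 x⟫ ≤ maxW D l x := by
  rw [inner_weyl_apply]
  exact inner_weyl_le_maxW D w⁻¹ l x

theorem maxW_weyl_apply_le (v : weylGroup D) (l x : V) : maxW D l (v.1 x) ≤ maxW D l x :=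
  ciSup_le fun w => by
    rw [inner_weyl_apply]
    exact inner_weyl_le_maxW D (v⁻¹ * w) l x

theorem maxW_le_add_norm_mul_norm_sub (l x y : V) : maxW D l y ≤ maxW D l x + ‖l‖ * ‖y - x‖ :=
  ciSup_le fun w => by
    have h := real_inner_le_norm (w.1 l) (y - x)
    rw [norm_weyl_apply, inner_sub_right] at h
    linarith [inner_weyl_le_maxW D w l x]

theorem maxW_le_add_norm_sub_mul_norm (l m x : V) : maxW D m x ≤ maxW D l x + ‖m - l‖ * ‖x‖ :=
  ciSup_le fun w => by
    have h := real_inner_le_norm (w.1 (m - l)) x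
    rw [norm_weyl_apply, map_sub, inner_sub_left] at h
    linarith [inner_weyl_le_maxW D w l x]

end MaxW

section ExchangeSystem

open scoped Topology

variable {ι κ : Type*} [Finite ι] {s : Finset κ} {σ : κ → ι → ι} {a : κ → ι → ℝ → ℝ}
  {f f' : ι → ℝ → ℝ}

theorem le_exp_mul_of_exchange {r : ι → ℝ → ℝ} {c M : ℝ}
    (hf : ∀ i t, HasDerivAt (f i) (f' i t) t)
    (ha : ∀ i, ∀ t ∈ Set.Icc (0 : ℝ) 1, ∀ k ∈ s, 0 ≤ a k i t)
    (hle : ∀ i, ∀ t ∈ Set.Icc (0 : ℝ) 1,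
      t * f' i t ≤ ∑ k ∈ s, a k i t * (f (σ k i) t - f i t) + t * r i t)
    (h0 : ∀ i, f i 0 ≤ M)
    (hr : ∀ i, ∀ t ∈ Set.Icc (0 : ℝ) 1, Real.exp (c * t) * M < f i t → r i t ≤ c * f i t) (i : ι) :
    f i 1 ≤ Real.exp c * M := by
  have hexp : ∀ t : ℝ,
      HasDerivAt (fun t : ℝ => Real.exp (-(c * t))) (-(Real.exp (-(c * t)) * c)) t :=
    fun t => by simpa using ((hasDerivAt_id t).const_mul c).neg.exp
  have hdamped := le_of_forall_lt_nonpos_of_exchange (s := s) (σ := σ) (a := a) (M := M)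
    (f := fun i t => Real.exp (-(c * t)) * f i t)
    (r := fun i t => Real.exp (-(c * t)) * (r i t - c * f i t))
    (fun i t => (hexp t).mul (hf i t)) ha (fun i t ht => ?_) (fun i => ?_) (fun i t ht hM => ?_) i
  · rw [mul_one, Real.exp_neg] at hdamped
    exact (inv_mul_le_iff₀ (Real.exp_pos c)).1 hdamped
  · simp only [← mul_sub, mul_left_comm (a _ i t), ← Finset.mul_sum]
    linarith [mul_le_mul_of_nonneg_left (hle i t ht) (Real.exp_pos (-(c * t))).le]
  · simpa using h0 i
  · rw [Real.exp_neg, lt_inv_mul_iff₀ (Real.exp_pos _)] at hM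
    exact mul_nonpos_of_nonneg_of_nonpos (Real.exp_pos _).le (sub_nonpos.2 (hr i t ht hM))

theorem mul_neg_eq_exchange {t u u' b : ℝ} {a v : κ → ℝ}
    (h : t * u' = ∑ k ∈ s, a k * (v k - u) + t * (b * u)) :
    t * -u' = ∑ k ∈ s, a k * (-v k - -u) + t * -(b * u) := by
  simp only [← neg_sub', mul_neg, Finset.sum_neg_distrib]
  rw [h, neg_add]

variable {b : ι → ℝ}

theorem nonneg_of_exchange (hf : ∀ i t, HasDerivAt (f i) (f' i t) t)
    (ha : ∀ i, ∀ t ∈ Set.Icc (0 : ℝ) 1, ∀ k ∈ s, 0 ≤ a k i t)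
    (heq : ∀ i t, t * f' i t = ∑ k ∈ s, a k i t * (f (σ k i) t - f i t) + t * (b i * f i t))
    (h0 : ∀ i, 0 ≤ f i 0) (i : ι) : 0 ≤ f i 1 := by
  obtain ⟨c, hc⟩ := (Set.finite_range b).bddAbove
  have hneg := le_exp_mul_of_exchange (s := s) (σ := σ) (a := a) (M := 0) (c := c)
    (f := fun i t => -f i t) (r := fun i t => -(b i * f i t)) (fun i t => (hf i t).neg) ha
    (fun i t _ => ?_) (fun i => neg_nonpos.2 (h0 i)) (fun i t _ hpos => ?_) i
  · simpa using hneg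
  · exact (mul_neg_eq_exchange (heq i t)).le
  · rw [mul_zero] at hpos
    linarith [mul_le_mul_of_nonneg_right (hc ⟨i, rfl⟩) hpos.le]

theorem exp_neg_mul_le_of_exchange {B m : ℝ} (hf : ∀ i t, HasDerivAt (f i) (f' i t) t)
    (ha : ∀ i, ∀ t ∈ Set.Icc (0 : ℝ) 1, ∀ k ∈ s, 0 ≤ a k i t)
    (heq : ∀ i t, t * f' i t = ∑ k ∈ s, a k i t * (f (σ k i) t - f i t) + t * (b i * f i t))
    (hnonneg : ∀ i t, 0 ≤ f i t) (h0 : ∀ i, m ≤ f i 0) (hb : ∀ i, -B ≤ b i) (i : ι) :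
    Real.exp (-B) * m ≤ f i 1 := by
  have hneg := le_exp_mul_of_exchange (s := s) (σ := σ) (a := a) (M := -m) (c := -B)
    (f := fun i t => -f i t) (r := fun i t => -(b i * f i t)) (fun i t => (hf i t).neg) ha
    (fun i t _ => ?_) (fun i => neg_le_neg (h0 i)) (fun i t _ _ => ?_) i
  · simpa using hneg
  · exact (mul_neg_eq_exchange (heq i t)).le
  · linarith [mul_le_mul_of_nonneg_right (hb i) (hnonneg i t)]

theorem inner_mul_self (c u : ℂ) : ⟪u, c * u⟫ = c.re * ‖u‖ ^ 2 := by
  rw [← Complex.normSq_eq_norm_sq]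
  simp only [Complex.inner, Complex.mul_re, Complex.mul_im, Complex.conj_re, Complex.conj_im,
    Complex.normSq_apply]
  ring

theorem smul_deriv_div_eq_exchange {t γ γ' : ℝ} {u u' c : ℂ} {b : ℝ} {a v : κ → ℝ} {w : κ → ℂ}
    (hγ : γ ≠ 0) (hv : ∀ k ∈ s, v k ≠ 0)
    (hγ' : t * γ' = ∑ k ∈ s, a k * (v k - γ) + t * (b * γ))
    (hu' : t • u' = ∑ k ∈ s, a k • (w k - u) + t • (c * u)) :
    t • (γ⁻¹ • u' + (-γ' / γ ^ 2) • u) =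
      ∑ k ∈ s, (a k * (v k / γ)) • ((v k)⁻¹ • w k - γ⁻¹ • u) + (t * (c - b)) * (γ⁻¹ • u) := by
  have hsum : ∑ k ∈ s, (a k * (v k / γ)) • ((v k)⁻¹ • w k - γ⁻¹ • u) =
      γ⁻¹ • ∑ k ∈ s, a k • (w k - u) - (∑ k ∈ s, a k * (v k - γ)) • (γ ^ 2)⁻¹ • u := by
    rw [Finset.smul_sum, Finset.sum_smul, ← Finset.sum_sub_distrib]
    refine Finset.sum_congr rfl fun k hk => ?_
    have hγ₀ : (γ : ℂ) ≠ 0 := Complex.ofReal_ne_zero.2 hγ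
    have hv₀ : (v k : ℂ) ≠ 0 := Complex.ofReal_ne_zero.2 (hv k hk)
    simp only [Complex.real_smul]
    push_cast
    field_simp
    ring
  have hγ₀ : (γ : ℂ) ≠ 0 := Complex.ofReal_ne_zero.2 hγ
  rw [hsum, eq_sub_of_add_eq hu'.symm, eq_sub_of_add_eq hγ'.symm]
  simp only [Complex.real_smul]
  push_cast
  field_simp
  ring

/- The quotient `q = g / f` solves an exchange system whose weights `a f_σ / f` are again
nonnegative and whose zeroth order term is the difference of the two; apply the maximum principle
to `‖q‖²`. -/
theorem norm_le_exp_mul_of_exchange {g g' : ι → ℝ → ℂ} {c : ι → ℂ} {m : ℝ}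
    (hf : ∀ i t, HasDerivAt (f i) (f' i t) t) (hg : ∀ i t, HasDerivAt (g i) (g' i t) t)
    (ha : ∀ i, ∀ t ∈ Set.Icc (0 : ℝ) 1, ∀ k ∈ s, 0 ≤ a k i t) (hpos : ∀ i t, 0 < f i t)
    (hfeq : ∀ i t, t * f' i t = ∑ k ∈ s, a k i t * (f (σ k i) t - f i t) + t * (b i * f i t))
    (hgeq : ∀ i t, t • g' i t = ∑ k ∈ s, a k i t • (g (σ k i) t - g i t) + t • (c i * g i t))
    (h0 : ∀ i, ‖g i 0‖ ≤ f i 0) (hcb : ∀ i, (c i).re ≤ b i + m) (i : ι) :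
    ‖g i 1‖ ≤ Real.exp m * f i 1 := by
  set q : ι → ℝ → ℂ := fun i t => (f i t)⁻¹ • g i t
  set q' : ι → ℝ → ℂ := fun i t => (f i t)⁻¹ • g' i t + (-f' i t / f i t ^ 2) • g i t
  have hnorm : ∀ i t, ‖q i t‖ = (f i t)⁻¹ * ‖g i t‖ := fun i t => by
    rw [norm_smul, norm_inv, Real.norm_of_nonneg (hpos i t).le]
  have hq : ∀ i t, HasDerivAt (q i) (q' i t) t := fun i t =>
    ((hf i t).inv (hpos i t).ne').smul (hg i t)
  have hsq := le_exp_mul_of_exchange (s := s) (σ := σ) (c := 2 * m) (M := 1)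
    (a := fun k i t => a k i t * (f (σ k i) t / f i t)) (f := fun i t => ‖q i t‖ ^ 2)
    (r := fun i t => 2 * ((c i - b i).re * ‖q i t‖ ^ 2)) (fun i t => (hq i t).norm_sq)
    (fun i t ht k hk => mul_nonneg (ha i t ht k hk) (div_nonneg (hpos _ t).le (hpos i t).le))
    (fun i t ht => ?_) (fun i => ?_) (fun i t _ _ => ?_) i
  · rw [mul_one, two_mul m, Real.exp_add, ← sq] at hsq
    have := le_of_sq_le_sq hsq (Real.exp_pos m).le
    rwa [hnorm, mul_comm, ← div_eq_mul_inv, div_le_iff₀ (hpos i 1)] at this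
  · have hweight : ∀ k ∈ s, 0 ≤ a k i t * (f (σ k i) t / f i t) := fun k hk =>
      mul_nonneg (ha i t ht k hk) (div_nonneg (hpos _ t).le (hpos i t).le)
    rw [mul_left_comm, ← real_inner_smul_right, smul_deriv_div_eq_exchange (hpos i t).ne'
      (fun k _ => (hpos (σ k i) t).ne') (hfeq i t) (hgeq i t), inner_add_right, inner_sum, mul_add,
      Finset.mul_sum]
    refine add_le_add (Finset.sum_le_sum fun k hk => ?_) (le_of_eq ?_)
    · have := two_mul_inner_smul_sub_le le_rfl (neg_zero.trans_le (hweight k hk)) (q i t)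
        (q (σ k i) t)
      rwa [mul_zero, zero_mul, add_zero, abs_of_nonneg (hweight k hk)] at this
    · rw [inner_mul_self, Complex.re_ofReal_mul]
      ring
  · rw [hnorm]
    exact pow_le_one₀ (by have := (hpos i 0).le; positivity)
      ((inv_mul_le_iff₀ (hpos i 0)).2 ((h0 i).trans_eq (mul_one _).symm))
  · rw [Complex.sub_re, Complex.ofReal_re]
    nlinarith [hcb i, sq_nonneg ‖q i t‖]

end ExchangeSystem

section Positivity

variable {V : Type*} [NormedAddCommGroup V] [InnerProductSpace ℝ V] {D : HOData V}

namespace IsCherednikSolution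

section Ray

variable {K : Type*} [NormedField K] [NormedAlgebra ℝ K] {χ : V →L[ℝ] K} {G : V → K}

theorem hasDerivAt_ray (hG : IsCherednikSolution D χ G) (w : weylGroup D) (x : V) (t : ℝ) :
    HasDerivAt (fun t : ℝ => G (w.1 (t • x))) (fderiv ℝ (fun y => G (w.1 y)) (t • x) x) t := by
  have hdiff : DifferentiableAt ℝ (fun y => G (w.1 y)) (t • x) :=
    (hG.contDiff.differentiable (by simp) _).comp _ w.1.toContinuousLinearEquiv.differentiableAt
  have hray : HasDerivAt (fun t : ℝ => t • x) x t := by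
    simpa using (hasDerivAt_id t).smul_const x
  exact hdiff.hasFDerivAt.comp_hasDerivAt (f := fun t : ℝ => t • x) t hray

theorem smul_fderiv_ray (hG : IsCherednikSolution D χ G) (w : weylGroup D) (x : V) (t : ℝ) :
    t • fderiv ℝ (fun y => G (w.1 y)) (t • x) x =
      ∑ α ∈ D.Rpos, eulerCoeff D 0 α (w.1 (t • x)) •
        (G ((weylRefl D α * w).1 (t • x)) - G (w.1 (t • x))) +
          t • (χ (w.1 x) * G (w.1 (t • x))) := by
  have h := hG.fderiv_euler_comp_weyl w (p := 0) (z := t • x) fun α _ =>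
    Or.inl (by rw [map_zero, inner_zero_right])
  rw [sub_zero, map_zero, map_smul (fderiv ℝ _ _), map_smul w.1, map_smul χ, smul_mul_assoc] at h
  rwa [map_smul w.1]

end Ray

theorem eulerCoeff_zero_nonneg {α : V} (hα : α ∈ D.Rpos) (z : V) : 0 ≤ eulerCoeff D 0 α z :=
  eulerCoeff_nonneg (D.pos_subset hα) (inner_zero_right α)

variable [Finite (weylGroup D)] {χ₀ : V →L[ℝ] ℝ} {G₀ : V → ℝ}

theorem nonneg (hG : IsCherednikSolution D χ₀ G₀) (h0 : 0 ≤ G₀ 0) (x : V) : 0 ≤ G₀ x := by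
  have h := nonneg_of_exchange (fun w t => hG.hasDerivAt_ray w x t)
    (fun w t _ α hα => eulerCoeff_zero_nonneg hα (w.1 (t • x)))
    (fun w t => hG.smul_fderiv_ray w x t) (fun w => by simpa using h0) 1
  simpa using h

theorem exp_neg_mul_le (hG : IsCherednikSolution D χ₀ G₀) (h0 : 0 ≤ G₀ 0) (x : V) :
    Real.exp (-(‖χ₀‖ * ‖x‖)) * G₀ 0 ≤ G₀ x := by
  have h := exp_neg_mul_le_of_exchange (B := ‖χ₀‖ * ‖x‖) (m := G₀ 0)
    (fun w t => hG.hasDerivAt_ray w x t)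
    (fun w t _ α hα => eulerCoeff_zero_nonneg hα (w.1 (t • x)))
    (fun w t => hG.smul_fderiv_ray w x t) (fun w t => hG.nonneg h0 _) (fun w => by simp)
    (fun w => (abs_le.1 (norm_weyl_apply w x ▸ χ₀.le_opNorm (w.1 x))).1) 1
  simpa using h

theorem pos (hG : IsCherednikSolution D χ₀ G₀) (h0 : 0 < G₀ 0) (x : V) : 0 < G₀ x :=
  (mul_pos (Real.exp_pos _) h0).trans_le (hG.exp_neg_mul_le h0.le x)

theorem norm_le_exp_mul {χ : V →L[ℝ] ℂ} {G : V → ℂ} (hG : IsCherednikSolution D χ G)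
    (hG₀ : IsCherednikSolution D χ₀ G₀) (hpos : 0 < G₀ 0) (h0 : ‖G 0‖ ≤ G₀ 0) {x : V} {m : ℝ}
    (hm : ∀ w : weylGroup D, (χ (w.1 x)).re ≤ χ₀ (w.1 x) + m) : ‖G x‖ ≤ Real.exp m * G₀ x := by
  have h := norm_le_exp_mul_of_exchange (fun w t => hG₀.hasDerivAt_ray w x t)
    (fun w t => hG.hasDerivAt_ray w x t)
    (fun w t _ α hα => eulerCoeff_zero_nonneg hα (w.1 (t • x))) (fun w t => hG₀.pos hpos _)
    (fun w t => hG₀.smul_fderiv_ray w x t) (fun w t => hG.smul_fderiv_ray w x t)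
    (fun w => by simpa using h0) hm 1
  simpa using h

end IsCherednikSolution

theorem IsOpdamR.pos [Finite (weylGroup D)] {l : V} {G : V → ℝ} (hG : IsOpdamR D l G) (x : V) :
    0 < G x :=
  hG.isCherednikSolution.pos (hG.2.1 ▸ one_pos) x

theorem IsOpdamC.norm_le [Fintype (weylGroup D)] {l₁ l₂ : V} {G : V → ℂ} (hG : IsOpdamC D l₁ l₂ G)
    {G₀ : V → ℝ} (hG₀ : IsOpdamR D 0 G₀) (x : V) : ‖G x‖ ≤ Real.exp (maxW D l₁ x) * G₀ x := by
  refine hG.isCherednikSolution.norm_le_exp_mul hG₀.isCherednikSolution (hG₀.2.1 ▸ one_pos)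
    (by rw [hG.2.1, hG₀.2.1, norm_one]) fun w => ?_
  have hre : (spectralForm D l₁ l₂ (w.1 x)).re = ⟪rhoHO D + l₁, w.1 x⟫ := by
    simp [spectralForm_apply]
  rw [hre, inner_add_left, add_zero]
  exact add_le_add_right (inner_weyl_right_le_maxW D w l₁ x) _

end Positivity

section Harnack

open scoped ContDiff

variable {V : Type*} [NormedAddCommGroup V] [InnerProductSpace ℝ V]

theorem le_exp_mul_of_norm_fderiv_le {F : V → ℝ} {C : ℝ} (hF : Differentiable ℝ F)
    (hpos : ∀ x, 0 < F x) (hC : ∀ x, ‖fderiv ℝ F x‖ ≤ C * F x) (x y : V) :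
    F y ≤ Real.exp (C * ‖y - x‖) * F x := by
  have hlog : ‖Real.log (F y) - Real.log (F x)‖ ≤ C * ‖y - x‖ := by
    refine convex_univ.norm_image_sub_le_of_norm_hasFDerivWithin_le (𝕜 := ℝ)
      (fun z _ => ((hF z).hasFDerivAt.log (hpos z).ne').hasFDerivWithinAt) (fun z _ => ?_)
      (Set.mem_univ x) (Set.mem_univ y)
    rw [norm_smul, norm_inv, Real.norm_of_nonneg (hpos z).le, inv_mul_le_iff₀ (hpos z), mul_comm]
    exact hC z
  rw [← Real.exp_log (hpos y), ← Real.exp_log (hpos x), ← Real.exp_add]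
  exact Real.exp_le_exp.2 (by linarith [(abs_le.1 hlog).2])

theorem cherednikKernel_add_cherednikKernel_neg {s : ℝ} (hs : s ≠ 0) :
    cherednikKernel s + cherednikKernel (-s) = 1 := by
  have h₁ := one_sub_exp_neg_ne_zero hs
  have h₂ := one_sub_exp_neg_ne_zero (neg_ne_zero.2 hs)
  have hexp : Real.exp (-s) * Real.exp (- -s) = 1 := by
    rw [← Real.exp_add, add_neg_cancel, Real.exp_zero]
  rw [cherednikKernel, cherednikKernel, inv_add_inv h₁ h₂, div_eq_one_iff_eq (mul_ne_zero h₁ h₂)]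
  linear_combination -hexp

variable {D : HOData V}

theorem HORegular.weyl_apply {x : V} (hx : HORegular D x) (w : weylGroup D) :
    HORegular D (w.1 x) := fun α hα => by
  rw [inner_weyl_apply]
  exact hx _ (weylGroup_apply_mem w⁻¹ hα)

theorem sum_inner_rpos (ξ : V) : ∑ α ∈ D.Rpos, D.k α * ⟪α, ξ⟫ = 2 * ⟪rhoHO D, ξ⟫ := by
  rw [rhoHO, real_inner_smul_left, sum_inner, mul_inv_cancel_left₀ two_ne_zero]
  simp only [real_inner_smul_left]

variable [Fintype (weylGroup D)]

theorem Fsym_weyl_apply (G : V → ℝ) (v : weylGroup D) (x : V) :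
    Fsym D G (v.1 x) = Fsym D G x := by
  unfold Fsym
  congr 1
  exact Fintype.sum_equiv (Equiv.mulRight v) _ _ fun w => rfl

theorem Fsym_pos {G : V → ℝ} (hG : ∀ x, 0 < G x) (x : V) : 0 < Fsym D G x :=
  mul_pos (inv_pos.2 (Nat.cast_pos.2 Fintype.card_pos))
    (Finset.sum_pos (fun _ _ => hG _) Finset.univ_nonempty)

theorem le_card_mul_Fsym {G : V → ℝ} (hG : ∀ x, 0 ≤ G x) (x : V) :
    G x ≤ Fintype.card (weylGroup D) * Fsym D G x := by
  rw [Fsym, mul_inv_cancel_left₀ (Nat.cast_ne_zero.2 Fintype.card_ne_zero)]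
  exact Finset.single_le_sum (f := fun w : weylGroup D => G (w.1 x)) (fun w _ => hG _)
    (Finset.mem_univ 1)

theorem hasFDerivAt_Fsym {G : V → ℝ} (hG : Differentiable ℝ G) (x : V) :
    HasFDerivAt (Fsym D G) ((Fintype.card (weylGroup D) : ℝ)⁻¹ • ∑ w : weylGroup D,
      fderiv ℝ G (w.1 x) ∘L (w.1.toContinuousLinearEquiv : V →L[ℝ] V)) x := by
  unfold Fsym
  refine HasFDerivAt.const_mul (HasFDerivAt.fun_sum fun w _ => ?_) _
  exact (hG (w.1 x)).hasFDerivAt.comp x w.1.toContinuousLinearEquiv.hasFDerivAt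

theorem fderiv_Fsym_apply {G : V → ℝ} (hG : Differentiable ℝ G) (x ξ : V) :
    fderiv ℝ (Fsym D G) x ξ =
      (Fintype.card (weylGroup D) : ℝ)⁻¹ * ∑ w : weylGroup D, fderiv ℝ G (w.1 x) (w.1 ξ) := by
  rw [(hasFDerivAt_Fsym hG x).fderiv]
  simp

/- The substitution `w ↦ r_α w` flips the signs of `(α, w ξ)` and `(α, w x)`, and the two resulting
kernels add up to one. -/
theorem sum_weyl_mul_cherednikKernel {α : V} (hα : α ∈ D.R) (ξ : V) {x : V} (hx : HORegular D x)
    (g : weylGroup D → ℝ) :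
    ∑ w : weylGroup D, D.k α * ⟪α, w.1 ξ⟫ * cherednikKernel ⟪α, w.1 x⟫ *
      (g (weylRefl D α * w) - g w) = -∑ w : weylGroup D, D.k α * ⟪α, w.1 ξ⟫ * g w := by
  have hflip : ∑ w : weylGroup D, D.k α * ⟪α, w.1 ξ⟫ * cherednikKernel ⟪α, w.1 x⟫ *
      g (weylRefl D α * w) =
      -∑ w : weylGroup D, D.k α * ⟪α, w.1 ξ⟫ * cherednikKernel (-⟪α, w.1 x⟫) * g w := by
    rw [← Finset.sum_neg_distrib]
    refine Fintype.sum_equiv (Equiv.mulLeft (weylRefl D α)) _ _ fun w => ?_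
    rw [Equiv.coe_mulLeft, weylRefl_mul_apply hα, weylRefl_mul_apply hα, inner_rRefl_self,
      inner_rRefl_self, neg_neg]
    ring
  simp only [mul_sub]
  rw [Finset.sum_sub_distrib, hflip, ← neg_add', ← Finset.sum_add_distrib]
  refine congrArg Neg.neg (Finset.sum_congr rfl fun w _ => ?_)
  linear_combination (D.k α * ⟪α, w.1 ξ⟫ * g w) *
    cherednikKernel_add_cherednikKernel_neg (hx.weyl_apply w α hα)

namespace IsCherednikSolution

variable {χ : V →L[ℝ] ℝ} {G : V → ℝ}

theorem sum_fderiv_weyl_of_hoRegular (hG : IsCherednikSolution D χ G) {x : V} (hx : HORegular D x)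
    (ξ : V) : ∑ w : weylGroup D, fderiv ℝ G (w.1 x) (w.1 ξ) =
      ∑ w : weylGroup D, (χ - (2 : ℝ) • innerSL ℝ (rhoHO D)) (w.1 ξ) * G (w.1 x) := by
  have hsystem : ∀ w : weylGroup D, fderiv ℝ G (w.1 x) (w.1 ξ) =
      ∑ α ∈ D.Rpos, D.k α * ⟪α, w.1 ξ⟫ * cherednikKernel ⟪α, w.1 x⟫ *
        (G ((weylRefl D α * w).1 x) - G (w.1 x)) + χ (w.1 ξ) * G (w.1 x) := fun w => by
    rw [hG.fderiv_apply _ (hx.weyl_apply w)]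
    refine congrArg (· + _) (Finset.sum_congr rfl fun α hα => ?_)
    rw [weylRefl_mul_apply (D.pos_subset hα), smul_eq_mul]
  have hcancel : ∀ α ∈ D.Rpos, ∑ w : weylGroup D, D.k α * ⟪α, w.1 ξ⟫ *
      cherednikKernel ⟪α, w.1 x⟫ * (G ((weylRefl D α * w).1 x) - G (w.1 x)) =
      -∑ w : weylGroup D, D.k α * ⟪α, w.1 ξ⟫ * G (w.1 x) := fun α hα =>
    sum_weyl_mul_cherednikKernel (D.pos_subset hα) ξ hx fun w => G (w.1 x)
  simp only [hsystem]
  rw [Finset.sum_add_distrib, Finset.sum_comm, Finset.sum_congr rfl hcancel,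
    Finset.sum_neg_distrib, Finset.sum_comm, neg_add_eq_sub, ← Finset.sum_sub_distrib]
  refine Finset.sum_congr rfl fun w _ => ?_
  rw [← Finset.sum_mul, sum_inner_rpos, ← sub_mul]
  rfl

theorem sum_fderiv_weyl (hG : IsCherednikSolution D χ G) (x ξ : V) :
    ∑ w : weylGroup D, fderiv ℝ G (w.1 x) (w.1 ξ) =
      ∑ w : weylGroup D, (χ - (2 : ℝ) • innerSL ℝ (rhoHO D)) (w.1 ξ) * G (w.1 x) := by
  have hGc : Continuous G := hG.contDiff.continuous
  have hG' : Continuous (fderiv ℝ G) := hG.contDiff.continuous_fderiv (by simp)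
  have hw : ∀ w : weylGroup D, Continuous w.1 := fun w => w.1.continuous
  refine eq_of_forall_hoRegular_eq D (Continuous.continuousAt ?_) (Continuous.continuousAt ?_)
    fun y hy => hG.sum_fderiv_weyl_of_hoRegular hy ξ
  · exact continuous_finsetSum _ fun w _ => (hG'.comp (hw w)).clm_apply continuous_const
  · exact continuous_finsetSum _ fun w _ => continuous_const.mul (hGc.comp (hw w))

theorem norm_fderiv_Fsym_le (hG : IsCherednikSolution D χ G) (h0 : 0 ≤ G 0) (x : V) :
    ‖fderiv ℝ (Fsym D G) x‖ ≤ ‖χ - (2 : ℝ) • innerSL ℝ (rhoHO D)‖ * Fsym D G x := by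
  have hcard : (0 : ℝ) ≤ (Fintype.card (weylGroup D) : ℝ)⁻¹ := by positivity
  have hpos : ∀ w : weylGroup D, 0 ≤ G (w.1 x) := fun w => hG.nonneg h0 _
  refine ContinuousLinearMap.opNorm_le_bound _
    (mul_nonneg (norm_nonneg _) (mul_nonneg hcard (Finset.sum_nonneg fun w _ => hpos w)))
    fun ξ => ?_
  rw [fderiv_Fsym_apply (hG.contDiff.differentiable (by simp)), hG.sum_fderiv_weyl, norm_mul,
    Real.norm_of_nonneg hcard, Fsym, mul_right_comm, mul_left_comm, Finset.mul_sum]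
  refine mul_le_mul_of_nonneg_left (norm_sum_le_of_le _ fun w _ => ?_) hcard
  rw [norm_mul, Real.norm_of_nonneg (hpos w), ← norm_weyl_apply w ξ]
  exact mul_le_mul_of_nonneg_right (ContinuousLinearMap.le_opNorm _ _) (hpos w)

end IsCherednikSolution

theorem IsOpdamR.Fsym_le_exp_mul {G : V → ℝ} (hG : IsOpdamR D 0 G) (x y : V) :
    Fsym D G y ≤ Real.exp (‖rhoHO D‖ * ‖y - x‖) * Fsym D G x := by
  have hsol := hG.isCherednikSolution
  refine le_exp_mul_of_norm_fderiv_le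
    (fun z => (hasFDerivAt_Fsym (hsol.contDiff.differentiable (by simp)) z).differentiableAt)
    (Fsym_pos hG.pos) (fun z => ?_) x y
  have h := hsol.norm_fderiv_Fsym_le (hG.2.1 ▸ zero_le_one) z
  have hρ : innerSL ℝ (rhoHO D + 0) - (2 : ℝ) • innerSL ℝ (rhoHO D) = -innerSL ℝ (rhoHO D) := by
    rw [add_zero, two_smul, sub_add_cancel_left]
  rwa [hρ, norm_neg, innerSL_apply_norm] at h

end Harnack

section Majorant

variable {V : Type*} [NormedAddCommGroup V] [InnerProductSpace ℝ V] {D : HOData V}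
  [Fintype (weylGroup D)]

/-- The function `F₀(x) e^{max_w (w λ, x)}` that dominates the Opdam functions, as a function of
`l = Re λ` and `x`. -/
def opdamMajorant (D : HOData V) [Fintype (weylGroup D)] (G₀ : V → ℝ) (l x : V) : ℝ :=
  Fsym D G₀ x * Real.exp (maxW D l x)

variable {G₀ : V → ℝ}

theorem IsOpdamR.opdamMajorant_pos (hG₀ : IsOpdamR D 0 G₀) (l x : V) :
    0 < opdamMajorant D G₀ l x := mul_pos (Fsym_pos hG₀.pos x) (Real.exp_pos _)

theorem IsOpdamC.norm_le_opdamMajorant {l₁ l₂ : V} {G : V → ℂ} (hG : IsOpdamC D l₁ l₂ G)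
    (hG₀ : IsOpdamR D 0 G₀) (x : V) :
    ‖G x‖ ≤ Fintype.card (weylGroup D) * opdamMajorant D G₀ l₁ x := by
  rw [opdamMajorant, ← mul_assoc, mul_comm _ (Real.exp _)]
  exact (hG.norm_le hG₀ x).trans (mul_le_mul_of_nonneg_left
    (le_card_mul_Fsym (fun y => (hG₀.pos y).le) x) (Real.exp_pos _).le)

theorem IsOpdamR.opdamMajorant_weyl_apply_le (hG₀ : IsOpdamR D 0 G₀) (l : V) (w : weylGroup D)
    (x : V) : opdamMajorant D G₀ l (w.1 x) ≤ opdamMajorant D G₀ l x := by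
  rw [opdamMajorant, opdamMajorant, Fsym_weyl_apply]
  exact mul_le_mul_of_nonneg_left (Real.exp_le_exp.2 (maxW_weyl_apply_le D w l x))
    (Fsym_pos hG₀.pos x).le

theorem IsOpdamR.opdamMajorant_le_exp_mul (hG₀ : IsOpdamR D 0 G₀) (l x y : V) :
    opdamMajorant D G₀ l y ≤
      Real.exp ((‖rhoHO D‖ + ‖l‖) * ‖y - x‖) * opdamMajorant D G₀ l x :=
  calc opdamMajorant D G₀ l y
    _ ≤ Real.exp (‖rhoHO D‖ * ‖y - x‖) * Fsym D G₀ x *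
        Real.exp (maxW D l x + ‖l‖ * ‖y - x‖) :=
      mul_le_mul (hG₀.Fsym_le_exp_mul x y)
        (Real.exp_le_exp.2 (maxW_le_add_norm_mul_norm_sub D l x y)) (Real.exp_pos _).le
        (mul_nonneg (Real.exp_pos _).le (Fsym_pos hG₀.pos x).le)
    _ = Real.exp ((‖rhoHO D‖ + ‖l‖) * ‖y - x‖) * opdamMajorant D G₀ l x := by
      rw [opdamMajorant, add_mul, Real.exp_add, Real.exp_add]
      ring

theorem IsOpdamR.opdamMajorant_le_exp_mul_of_norm_sub (hG₀ : IsOpdamR D 0 G₀) (l m x : V) :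
    opdamMajorant D G₀ m x ≤ Real.exp (‖m - l‖ * ‖x‖) * opdamMajorant D G₀ l x := by
  rw [opdamMajorant, opdamMajorant, mul_left_comm, ← Real.exp_add, add_comm]
  exact mul_le_mul_of_nonneg_left
    (Real.exp_le_exp.2 (maxW_le_add_norm_sub_mul_norm D l m x)) (Fsym_pos hG₀.pos x).le

end Majorant

section CoefficientBounds

open scoped ContDiff Topology

theorem abs_iteratedDeriv_sub_const_le {s s₀ τ : ℝ} (hτ : 0 < τ) (h : |s - s₀| ≤ τ) (i : ℕ) :
    |iteratedDeriv i (fun v : ℝ => v - s₀) s| ≤ τ * τ⁻¹ ^ i := by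
  rcases i with _ | i
  · simpa using h
  · have hderiv : deriv (fun v : ℝ => v - s₀) = fun _ => (1 : ℝ) := by
      funext v
      simp
    rw [iteratedDeriv_succ', hderiv, iteratedDeriv_const]
    split_ifs with hi
    · simp [hi, hτ.ne']
    · rw [abs_zero]
      positivity

theorem one_add_abs_inv_le {s τ : ℝ} (hτ : 0 < τ) (hτ1 : τ ≤ 1) (hs : τ / 2 ≤ |s|) :
    1 + |s|⁻¹ ≤ 3 * τ⁻¹ := by
  have hinv : |s|⁻¹ ≤ (τ / 2)⁻¹ := inv_anti₀ (by positivity) hs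
  rw [inv_div, div_eq_mul_inv] at hinv
  linarith [(one_le_inv₀ hτ).2 hτ1]

theorem exists_abs_iteratedDeriv_sub_mul_cherednikKernel_le (j : ℕ) :
    ∃ C : ℝ, 0 ≤ C ∧ ∀ s s₀ τ : ℝ, 0 < τ → τ ≤ 1 → |s - s₀| ≤ τ → τ / 2 ≤ |s| →
      |iteratedDeriv j (fun v => (v - s₀) * cherednikKernel v) s| ≤ C * τ⁻¹ ^ j := by
  choose C hC₀ hC using exists_abs_iteratedDeriv_cherednikKernel_le
  refine ⟨∑ i ∈ Finset.range (j + 1), (j.choose i : ℝ) * (C (j - i) * 3 ^ (j - i + 1)),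
    Finset.sum_nonneg fun i _ => by have := hC₀ (j - i); positivity,
    fun s s₀ τ hτ hτ1 hs₀ hs => ?_⟩
  have hs' : s ≠ 0 := abs_pos.1 ((half_pos hτ).trans_le hs)
  rw [iteratedDeriv_fun_mul (by fun_prop)
    ((contDiffAt_cherednikKernel hs').of_le (by exact_mod_cast le_top)), Finset.sum_mul]
  refine (Finset.abs_sum_le_sum_abs _ _).trans (Finset.sum_le_sum fun i hi => ?_)
  have hij : i + (j - i) = j := Nat.add_sub_cancel' (Nat.lt_succ_iff.1 (Finset.mem_range.1 hi))
  have hkernel : |iteratedDeriv (j - i) cherednikKernel s| ≤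
      C (j - i) * (3 * τ⁻¹) ^ (j - i + 1) :=
    (hC _ s hs').trans <| mul_le_mul_of_nonneg_left
      (pow_le_pow_left₀ (by positivity) (one_add_abs_inv_le hτ hτ1 hs) _) (hC₀ _)
  rw [abs_mul, abs_mul, Nat.abs_cast, mul_assoc, mul_assoc]
  refine mul_le_mul_of_nonneg_left ?_ (Nat.cast_nonneg _)
  calc |iteratedDeriv i (fun v => v - s₀) s| * |iteratedDeriv (j - i) cherednikKernel s|
    _ ≤ τ * τ⁻¹ ^ i * (C (j - i) * (3 * τ⁻¹) ^ (j - i + 1)) :=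
      mul_le_mul (abs_iteratedDeriv_sub_const_le hτ hs₀ i) hkernel (abs_nonneg _) (by positivity)
    _ = C (j - i) * 3 ^ (j - i + 1) * τ⁻¹ ^ (i + (j - i)) := by
      rw [mul_pow, pow_add, pow_succ τ⁻¹]
      linear_combination (C (j - i) * 3 ^ (j - i + 1) * τ⁻¹ ^ i * τ⁻¹ ^ (j - i)) *
        mul_inv_cancel₀ hτ.ne'
    _ = C (j - i) * 3 ^ (j - i + 1) * τ⁻¹ ^ j := by rw [hij]

variable {V : Type*} [NormedAddCommGroup V] [InnerProductSpace ℝ V] {D : HOData V}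

theorem norm_iteratedFDeriv_mul_comp_inner_le {f : ℝ → ℝ} {α y : V} {j : ℕ} {b : ℝ} (k : ℝ)
    (hf : ContDiffAt ℝ j f ⟪α, y⟫) (hb : |iteratedDeriv j f ⟪α, y⟫| ≤ b) :
    ‖iteratedFDeriv ℝ j (fun z => k * f ⟪α, z⟫) y‖ ≤ |k| * ‖α‖ ^ j * b := by
  have hcomp := norm_iteratedFDeriv_comp_clm_le (innerSL ℝ α) hf
  have hsmul := iteratedFDeriv_const_smul_apply' (a := k)
    (hf.comp y (innerSL ℝ α).contDiff.contDiffAt)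
  rw [innerSL_apply_norm] at hcomp
  calc ‖iteratedFDeriv ℝ j (fun z => k * f ⟪α, z⟫) y‖
    _ = |k| * ‖iteratedFDeriv ℝ j (fun z => f (innerSL ℝ α z)) y‖ := by
      rw [← Real.norm_eq_abs, ← norm_smul]
      exact congrArg norm hsmul
    _ ≤ |k| * (b * ‖α‖ ^ j) := by
      refine mul_le_mul_of_nonneg_left (hcomp.trans ?_) (abs_nonneg k)
      exact mul_le_mul_of_nonneg_right hb (by positivity)
    _ = |k| * ‖α‖ ^ j * b := by ring

theorem eulerCoeff_eq_toddFun {p α : V} (hp : ⟪α, p⟫ = 0) :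
    eulerCoeff D p α = fun z => D.k α * toddFun ⟪α, z⟫ :=
  funext fun _ => by rw [eulerCoeff, if_pos hp]

theorem eulerCoeff_eq_cherednikKernel {p α : V} (hp : ⟪α, p⟫ ≠ 0) :
    eulerCoeff D p α = fun z => D.k α * ((⟪α, z⟫ - ⟪α, p⟫) * cherednikKernel ⟪α, z⟫) :=
  funext fun _ => by rw [eulerCoeff, if_neg hp, inner_sub_right]

theorem IsAdapted.abs_inner_sub_le {η τ : ℝ} {p y : V} (h : IsAdapted D η τ p y) (α : V) :
    |⟪α, y⟫ - ⟪α, p⟫| ≤ ‖α‖ * η * τ := by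
  rw [← inner_sub_right, mul_assoc]
  exact (abs_real_inner_le_norm _ _).trans
    (mul_le_mul_of_nonneg_left h.norm_sub_le (norm_nonneg α))

theorem exists_norm_iteratedFDeriv_eulerCoeff_le_of_mem (D : HOData V) {α : V} (hα : α ∈ D.R)
    {η : ℝ} (hη : ‖α‖ * η ≤ 1) (j : ℕ) :
    ∃ C : ℝ, ∀ p y τ, 0 < τ → τ ≤ 1 → IsAdapted D η τ p y →
      ‖iteratedFDeriv ℝ j (eulerCoeff D p α) y‖ ≤ C * τ⁻¹ ^ j := by
  obtain ⟨C₁, hC₁, hkernel⟩ := exists_abs_iteratedDeriv_sub_mul_cherednikKernel_le j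
  obtain ⟨C₂, hC₂, htodd⟩ := exists_abs_iteratedDeriv_toddFun_le j 1
  refine ⟨|D.k α| * ‖α‖ ^ j * (C₁ + C₂), fun p y τ hτ hτ1 hy => ?_⟩
  have hτj : 1 ≤ τ⁻¹ ^ j := one_le_pow₀ ((one_le_inv₀ hτ).2 hτ1)
  have hdist : |⟪α, y⟫ - ⟪α, p⟫| ≤ τ :=
    (hy.abs_inner_sub_le α).trans (mul_le_of_le_one_left hτ.le hη)
  rw [mul_assoc _ _ (τ⁻¹ ^ j)]
  rcases eq_or_ne ⟪α, p⟫ 0 with hp | hp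
  · rw [eulerCoeff_eq_toddFun hp]
    rw [hp, sub_zero] at hdist
    refine norm_iteratedFDeriv_mul_comp_inner_le _
      (contDiff_toddFun.contDiffAt.of_le (by exact_mod_cast le_top))
      ((htodd _ (hdist.trans hτ1)).trans ?_)
    calc C₂ ≤ C₂ * τ⁻¹ ^ j := le_mul_of_one_le_right hC₂ hτj
      _ ≤ (C₁ + C₂) * τ⁻¹ ^ j :=
        mul_le_mul_of_nonneg_right (le_add_of_nonneg_left hC₁) (by positivity)
  · have hfar := (hy.inner_eq_zero_or_le α hα).resolve_left hp
    have hy₀ : ⟪α, y⟫ ≠ 0 := abs_pos.1 ((half_pos hτ).trans_le hfar)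
    rw [eulerCoeff_eq_cherednikKernel hp]
    refine norm_iteratedFDeriv_mul_comp_inner_le (f := fun s => (s - ⟪α, p⟫) * cherednikKernel s) _
      (ContDiffAt.mul (by fun_prop)
        ((contDiffAt_cherednikKernel hy₀).of_le (by exact_mod_cast le_top)))
      ((hkernel _ _ τ hτ hτ1 hdist hfar).trans ?_)
    exact mul_le_mul_of_nonneg_right (le_add_of_nonneg_right hC₂) (by positivity)

theorem exists_norm_iteratedFDeriv_eulerCoeff_le (D : HOData V) {η : ℝ}
    (hη : ∀ α ∈ D.R, ‖α‖ * η ≤ 1) (N : ℕ) :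
    ∃ C : ℝ, 0 ≤ C ∧ ∀ α ∈ D.R, ∀ j ≤ N, ∀ p y τ, 0 < τ → τ ≤ 1 → IsAdapted D η τ p y →
      ‖iteratedFDeriv ℝ j (eulerCoeff D p α) y‖ ≤ C * τ⁻¹ ^ j := by
  have hbound : ∀ᶠ C : ℝ in Filter.atTop, ∀ α ∈ D.R, ∀ j ∈ Finset.range (N + 1), ∀ p y τ,
      0 < τ → τ ≤ 1 → IsAdapted D η τ p y →
        ‖iteratedFDeriv ℝ j (eulerCoeff D p α) y‖ ≤ C * τ⁻¹ ^ j := by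
    refine (Finset.eventually_all _).2 fun α hα => (Finset.eventually_all _).2 fun j _ => ?_
    obtain ⟨C, hC⟩ := exists_norm_iteratedFDeriv_eulerCoeff_le_of_mem D hα (hη α hα) j
    filter_upwards [Filter.eventually_ge_atTop C] with C' hCC' p y τ hτ hτ1 hy
    exact (hC p y τ hτ hτ1 hy).trans (mul_le_mul_of_nonneg_right hCC' (by positivity))
  obtain ⟨C, hC, hC₀⟩ := (hbound.and (Filter.eventually_ge_atTop 0)).exists
  exact ⟨C, hC₀, fun α hα j hj => hC α hα j (Finset.mem_range_succ_iff.2 hj)⟩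

theorem IsAdapted.neg_le_eulerCoeff {η τ : ℝ} {p α y : V} (hα : α ∈ D.R) (hη : 0 ≤ η)
    (hτ : 0 < τ) (hτ1 : τ ≤ 1) (hy : IsAdapted D η τ p y) :
    -(3 * (D.k α * ‖α‖) * η) ≤ eulerCoeff D p α y := by
  have hk := (D.k_pos α hα).le
  rcases eq_or_ne ⟪α, p⟫ 0 with hp | hp
  · exact (neg_nonpos.2 (by positivity)).trans (eulerCoeff_nonneg hα hp)
  · have hfar := (hy.inner_eq_zero_or_le α hα).resolve_left hp
    have hy₀ : ⟪α, y⟫ ≠ 0 := abs_pos.1 ((half_pos hτ).trans_le hfar)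
    have hkernel : |cherednikKernel ⟪α, y⟫| ≤ 3 * τ⁻¹ :=
      (abs_cherednikKernel_le hy₀).trans (one_add_abs_inv_le hτ hτ1 hfar)
    rw [eulerCoeff_eq_cherednikKernel hp]
    refine (abs_le.1 ?_).1
    calc |D.k α * ((⟪α, y⟫ - ⟪α, p⟫) * cherednikKernel ⟪α, y⟫)|
      _ ≤ D.k α * (‖α‖ * η * τ * (3 * τ⁻¹)) := by
        rw [abs_mul, abs_mul, abs_of_nonneg hk]
        exact mul_le_mul_of_nonneg_left
          (mul_le_mul (hy.abs_inner_sub_le α) hkernel (abs_nonneg _) (by positivity)) hk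
      _ = 3 * (D.k α * ‖α‖) * η := by field_simp

end CoefficientBounds

section SpectralWeight

variable {V : Type*} [NormedAddCommGroup V]

/-- The weight `1 + |λ|` of the spectral parameter `λ = l₁ + i l₂`. -/
def spectralWeight (l₁ l₂ : V) : ℝ := 1 + Real.sqrt (‖l₁‖ ^ 2 + ‖l₂‖ ^ 2)

theorem one_le_spectralWeight (l₁ l₂ : V) : 1 ≤ spectralWeight l₁ l₂ :=
  le_add_of_nonneg_right (Real.sqrt_nonneg _)

theorem one_add_norm_fst_le_spectralWeight (l₁ l₂ : V) : 1 + ‖l₁‖ ≤ spectralWeight l₁ l₂ :=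
  add_le_add_right (Real.le_sqrt_of_sq_le (le_add_of_nonneg_right (sq_nonneg _))) 1

theorem one_add_norm_snd_le_spectralWeight (l₁ l₂ : V) : 1 + ‖l₂‖ ≤ spectralWeight l₁ l₂ :=
  add_le_add_right (Real.le_sqrt_of_sq_le (le_add_of_nonneg_left (sq_nonneg _))) 1

theorem spectralWeight_le_two_add_mul {l₁ l₂ m₁ m₂ : V} {r : ℝ} (h₁ : ‖m₁ - l₁‖ ≤ r)
    (h₂ : ‖m₂ - l₂‖ ≤ r) : spectralWeight m₁ m₂ ≤ (2 + 2 * r) * spectralWeight l₁ l₂ := by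
  have hsqrt : √(‖m₁‖ ^ 2 + ‖m₂‖ ^ 2) ≤ ‖m₁‖ + ‖m₂‖ := by
    refine Real.sqrt_le_iff.2 ⟨by positivity, ?_⟩
    nlinarith [mul_nonneg (norm_nonneg m₁) (norm_nonneg m₂)]
  have hr : 0 ≤ 2 * r := mul_nonneg zero_le_two ((norm_nonneg _).trans h₁)
  have hm₁ := norm_le_norm_add_norm_sub' m₁ l₁
  have hm₂ := norm_le_norm_add_norm_sub' m₂ l₂
  rw [spectralWeight]
  linarith [one_add_norm_fst_le_spectralWeight l₁ l₂, one_add_norm_snd_le_spectralWeight l₁ l₂,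
    le_mul_of_one_le_right hr (one_le_spectralWeight l₁ l₂)]

end SpectralWeight

section SpaceEstimate

open scoped ContDiff Topology

variable {V : Type*} [NormedAddCommGroup V] [InnerProductSpace ℝ V] {D : HOData V}

theorem norm_spectralForm_le (l₁ l₂ : V) :
    ‖spectralForm D l₁ l₂‖ ≤ (‖rhoHO D‖ + 2) * spectralWeight l₁ l₂ := by
  have hform : ‖spectralForm D l₁ l₂‖ ≤ ‖rhoHO D‖ + ‖l₁‖ + ‖l₂‖ := by
    refine ContinuousLinearMap.opNorm_le_bound _ (by positivity) fun ξ => ?_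
    rw [spectralForm_apply, add_mul]
    refine norm_add_le_of_le ?_ ?_
    · rw [Complex.norm_real]
      exact (norm_inner_le_norm _ _).trans
        (mul_le_mul_of_nonneg_right (norm_add_le _ _) (norm_nonneg ξ))
    · rw [norm_mul, Complex.norm_I, one_mul, Complex.norm_real]
      exact norm_inner_le_norm _ _
  have hρ := le_mul_of_one_le_right (norm_nonneg (rhoHO D)) (one_le_spectralWeight l₁ l₂)
  linarith [one_add_norm_fst_le_spectralWeight l₁ l₂, one_add_norm_snd_le_spectralWeight l₁ l₂]

theorem exists_absorption_scale {ι : Type*} (S : Finset ι) (f : ι → ℝ) (M : ℝ) :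
    ∃ η : ℝ, 0 < η ∧ η ≤ 1 ∧ (∀ i ∈ S, f i * η ≤ 1 / 2) ∧ M * η ≤ 1 / 2 := by
  have hsmall : ∀ K : ℝ, ∀ᶠ η in 𝓝[>] (0 : ℝ), K * η ≤ 1 / 2 := fun K => by
    have hlim : Filter.Tendsto (fun η => K * η) (𝓝[>] 0) (𝓝 (K * 0)) :=
      ((continuous_const_mul K).tendsto 0).mono_left nhdsWithin_le_nhds
    exact hlim.eventually_le_const (by norm_num)
  have hpos : ∀ᶠ η in 𝓝[>] (0 : ℝ), 0 < η := self_mem_nhdsWithin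
  obtain ⟨η, ⟨⟨hη, hη1⟩, hS⟩, hM⟩ := (((hpos.and (hsmall 1)).and
    ((Finset.eventually_all S).2 fun i _ => hsmall (f i))).and (hsmall M)).exists
  exact ⟨η, hη, by linarith, hS, hM⟩

theorem contDiffAt_eulerCoeff_weyl {η τ : ℝ} {p y : V} (hy : IsAdapted D η τ p y) (hτ : 0 < τ)
    (w : weylGroup D) {α : V} (hα : α ∈ D.R) :
    ContDiffAt ℝ ∞ (eulerCoeff D (w.1 p) α) (w.1 y) :=
  contDiffAt_eulerCoeff <| ((hy.weyl_apply w).inner_eq_zero_or_le α hα).imp_right fun h =>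
    abs_pos.1 ((half_pos hτ).trans_le h)

theorem IsCherednikSolution.eventually_fderiv_euler_comp_weyl {χ : V →L[ℝ] ℂ} {G : V → ℂ}
    (hG : IsCherednikSolution D χ G) {η τ : ℝ} {p y : V} (hy : IsAdapted D η τ p y) (hτ : 0 < τ)
    (w : weylGroup D) :
    ∀ᶠ z in 𝓝 y, fderiv ℝ (fun y => G (w.1 y)) z (z - p) =
      ∑ α ∈ D.Rpos, eulerCoeff D (w.1 p) α (w.1 z) • (G ((weylRefl D α * w).1 z) - G (w.1 z)) +
        (χ ∘L (w.1.toContinuousLinearEquiv : V →L[ℝ] V)) (z - p) * G (w.1 z) := by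
  have hnear : ∀ᶠ z in 𝓝 y, ∀ α ∈ D.Rpos, ⟪α, w.1 p⟫ = 0 ∨ ⟪α, w.1 z⟫ ≠ 0 := by
    refine (Finset.eventually_all _).2 fun α hα => ?_
    rcases (hy.weyl_apply w).inner_eq_zero_or_le α (D.pos_subset hα) with h | h
    · exact Filter.Eventually.of_forall fun _ => Or.inl h
    · have hcont : Continuous fun z => ⟪α, w.1 z⟫ := continuous_const.inner w.1.continuous
      have hne : ⟪α, w.1 y⟫ ≠ 0 := abs_pos.1 ((half_pos hτ).trans_le h)
      exact (hcont.continuousAt.eventually_ne hne).mono fun _ => Or.inr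
  filter_upwards [hnear] with z hz using hG.fderiv_euler_comp_weyl w hz

theorem IsCherednikSolution.norm_iteratedFDeriv_le_of_isAdapted [Finite (weylGroup D)]
    {χ : V →L[ℝ] ℂ} {G : V → ℂ} (hG : IsCherednikSolution D χ G) {η τ A B K Λ : ℝ} {N : ℕ}
    {p x : V} (hN : 1 ≤ N) (hη : 0 ≤ η) (hτ : 0 < τ) (hτ1 : τ ≤ 1)
    (hadapt : ∀ y ∈ segment ℝ p x, IsAdapted D η τ p y) (hA : 0 ≤ A) (hB : 0 ≤ B) (hΛ : 0 ≤ Λ)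
    (hcoeff : ∀ α ∈ D.R, ∀ j ≤ N, ∀ p y, IsAdapted D η τ p y →
      ‖iteratedFDeriv ℝ j (eulerCoeff D p α) y‖ ≤ A * Λ ^ j)
    (hχ : ‖χ‖ ≤ A * Λ)
    (hlow : ∀ w : weylGroup D, ∀ y ∈ segment ℝ p x, ∀ j < N,
      ‖iteratedFDeriv ℝ j G (w.1 y)‖ ≤ B * Λ ^ j)
    (hK₀ : 0 ≤ K) (hK : ∀ α ∈ D.Rpos, D.k α * ‖α‖ ≤ K)
    (habsorb : 2 * (D.Rpos.card * (3 * K * η)) + ‖χ‖ * (η * τ) ≤ 1 / 2) :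
    ‖iteratedFDeriv ℝ N G x‖ ≤
      2 * ((2 * D.Rpos.card + 1) * ((2 ^ N - 1) * (A * B * Λ ^ N))) := by
  refine norm_iteratedFDeriv_le_of_euler_system (ι := weylGroup D) (s := D.Rpos)
    (σ := fun α w => weylRefl D α * w) (g := fun w y => G (w.1 y))
    (a := fun α w y => eulerCoeff D (w.1 p) α (w.1 y))
    (L := fun w => χ ∘L (w.1.toContinuousLinearEquiv : V →L[ℝ] V)) (δ := 3 * K * η) hN
    (fun w => hG.contDiff.comp w.1.contDiff) (fun w y hy α hα => ?_)
    (fun w y hy => hG.eventually_fderiv_euler_comp_weyl (hadapt y hy) hτ w) hA hB hΛ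
    (fun w y hy α hα j _ hj => ?_) (fun w => ?_) (fun w y hy j hj => ?_) (by positivity)
    (fun w y hy α hα => ?_) (fun w y hy => ?_) 1
  · exact (ContDiffAt.comp y (contDiffAt_eulerCoeff_weyl (hadapt y hy) hτ w (D.pos_subset hα))
      w.1.contDiff.contDiffAt).of_le (by exact_mod_cast le_top)
  · exact (w.1.norm_iteratedFDeriv_comp_right _ y j).trans_le
      (hcoeff α (D.pos_subset hα) j hj _ _ ((hadapt y hy).weyl_apply w))
  · exact (ContinuousLinearMap.opNorm_le_bound _ (norm_nonneg χ) fun ξ =>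
      norm_weyl_apply w ξ ▸ χ.le_opNorm (w.1 ξ)).trans hχ
  · exact (w.1.norm_iteratedFDeriv_comp_right G y j).trans_le (hlow w y hy j hj)
  · refine le_trans (neg_le_neg ?_) <|
      ((hadapt y hy).weyl_apply w).neg_le_eulerCoeff (D.pos_subset hα) hη hτ hτ1
    exact mul_le_mul_of_nonneg_right (mul_le_mul_of_nonneg_left (hK α hα) zero_le_three) hη
  · refine le_trans (add_le_add_right ?_ _) habsorb
    exact χ.le_of_opNorm_le_of_le le_rfl
      ((norm_weyl_apply w _).trans_le (hadapt y hy).norm_sub_le)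

theorem inv_pow_le_inv_pow_mul_pow {c τ Λ : ℝ} (hc : 0 < c) (hΛ : 0 < Λ) (hcτ : c * Λ⁻¹ ≤ τ)
    (hτ : τ ≤ Λ⁻¹) {j N : ℕ} (hj : j ≤ N) : τ⁻¹ ^ j ≤ c⁻¹ ^ N * Λ ^ j := by
  have hc1 : c ≤ 1 := (mul_le_iff_le_one_left (inv_pos.2 hΛ)).1 (hcτ.trans hτ)
  have hpos : 0 < c * Λ⁻¹ := mul_pos hc (inv_pos.2 hΛ)
  calc τ⁻¹ ^ j ≤ (c * Λ⁻¹)⁻¹ ^ j :=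
        pow_le_pow_left₀ (inv_nonneg.2 (hpos.le.trans hcτ)) (inv_anti₀ hpos hcτ) j
    _ = c⁻¹ ^ j * Λ ^ j := by rw [mul_inv, inv_inv, mul_pow]
    _ ≤ c⁻¹ ^ N * Λ ^ j := mul_le_mul_of_nonneg_right
        (pow_le_pow_right₀ ((one_le_inv₀ hc).2 hc1) hj) (pow_nonneg hΛ.le j)

theorem exists_isAdapted_norm_iteratedFDeriv_eulerCoeff_le (D : HOData V) (N : ℕ) (M : ℝ) :
    ∃ η A : ℝ, 0 < η ∧ η ≤ 1 ∧ M * η ≤ 1 / 2 ∧ 0 ≤ A ∧ ∀ Λ : ℝ, 1 ≤ Λ → ∀ x : V, ∃ p τ,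
      0 < τ ∧ τ ≤ Λ⁻¹ ∧ (∀ y ∈ segment ℝ p x, IsAdapted D η τ p y) ∧
      ∀ α ∈ D.R, ∀ j ≤ N, ∀ p y, IsAdapted D η τ p y →
        ‖iteratedFDeriv ℝ j (eulerCoeff D p α) y‖ ≤ A * Λ ^ j := by
  obtain ⟨η, hη, hη1, hηD, hηM⟩ := exists_absorption_scale D.R norm M
  obtain ⟨c, hc, hcenter⟩ := exists_forall_segment_isAdapted hη hηD
  obtain ⟨A, hA, hcoeff⟩ :=
    exists_norm_iteratedFDeriv_eulerCoeff_le D (fun α hα => (hηD α hα).trans (by norm_num)) N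
  refine ⟨η, A * c⁻¹ ^ N, hη, hη1, hηM, by positivity, fun Λ hΛ1 x => ?_⟩
  have hΛ : 0 < Λ := by linarith
  obtain ⟨p, τ, hcτ, hτΛ, hadapt⟩ := hcenter Λ⁻¹ (inv_pos.2 hΛ) x
  have hτ : 0 < τ := (mul_pos hc (inv_pos.2 hΛ)).trans_le hcτ
  have hτ1 : τ ≤ 1 := hτΛ.trans (inv_le_one_of_one_le₀ hΛ1)
  refine ⟨p, τ, hτ, hτΛ, hadapt, fun α hα j hj p y hy => ?_⟩
  rw [mul_assoc]
  exact (hcoeff α hα j hj p y τ hτ hτ1 hy).trans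
    (mul_le_mul_of_nonneg_left (inv_pow_le_inv_pow_mul_pow hc hΛ hcτ hτΛ hj) hA)

variable [Fintype (weylGroup D)] {G₀ : V → ℝ}

theorem IsOpdamR.opdamMajorant_weyl_apply_le_of_norm_sub_le (hG₀ : IsOpdamR D 0 G₀)
    {l₁ l₂ x y : V} (h : ‖y - x‖ ≤ (spectralWeight l₁ l₂)⁻¹) (w : weylGroup D) :
    opdamMajorant D G₀ l₁ (w.1 y) ≤
      Real.exp (‖rhoHO D‖ + 1) * opdamMajorant D G₀ l₁ x := by
  have hΛ := one_le_spectralWeight l₁ l₂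
  refine ((hG₀.opdamMajorant_weyl_apply_le l₁ w y).trans
    (hG₀.opdamMajorant_le_exp_mul l₁ x y)).trans
    (mul_le_mul_of_nonneg_right (Real.exp_le_exp.2 ?_) (hG₀.opdamMajorant_pos l₁ x).le)
  rw [add_mul]
  refine add_le_add
    (mul_le_of_le_one_right (norm_nonneg _) (h.trans (inv_le_one_of_one_le₀ hΛ))) ?_
  calc ‖l₁‖ * ‖y - x‖ ≤ spectralWeight l₁ l₂ * (spectralWeight l₁ l₂)⁻¹ :=
        mul_le_mul (by linarith [one_add_norm_fst_le_spectralWeight l₁ l₂]) h (norm_nonneg _)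
          (by linarith)
    _ = 1 := mul_inv_cancel₀ (by linarith)

theorem IsOpdamR.exists_norm_iteratedFDeriv_le_opdamMajorant_of_lt (hG₀ : IsOpdamR D 0 G₀) {N : ℕ}
    (hN : 1 ≤ N) {B : ℝ} (hB : 0 ≤ B)
    (hlow : ∀ j < N, ∀ (l₁ l₂ : V) (G : V → ℂ), IsOpdamC D l₁ l₂ G → ∀ x,
      ‖iteratedFDeriv ℝ j G x‖ ≤ B * opdamMajorant D G₀ l₁ x * spectralWeight l₁ l₂ ^ j) :
    ∃ C : ℝ, ∀ (l₁ l₂ : V) (G : V → ℂ), IsOpdamC D l₁ l₂ G → ∀ x,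
      ‖iteratedFDeriv ℝ N G x‖ ≤ C * opdamMajorant D G₀ l₁ x * spectralWeight l₁ l₂ ^ N := by
  have hterm : ∀ α ∈ D.Rpos, 0 ≤ D.k α * ‖α‖ := fun α hα =>
    mul_nonneg (D.k_pos α (D.pos_subset hα)).le (norm_nonneg α)
  set K := ∑ α ∈ D.Rpos, D.k α * ‖α‖
  obtain ⟨η, A, hη, hη1, hηM, hA, hcenter⟩ := exists_isAdapted_norm_iteratedFDeriv_eulerCoeff_le D N
    (2 * (D.Rpos.card * (3 * K)) + (‖rhoHO D‖ + 2))
  refine ⟨2 * ((2 * D.Rpos.card + 1) * ((2 ^ N - 1) *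
    ((A + (‖rhoHO D‖ + 2)) * (B * Real.exp (‖rhoHO D‖ + 1))))), fun l₁ l₂ G hG x => ?_⟩
  have hΛ1 := one_le_spectralWeight l₁ l₂
  have hχ := norm_spectralForm_le (D := D) l₁ l₂
  have hmaj := fun y => hG₀.opdamMajorant_weyl_apply_le_of_norm_sub_le (l₁ := l₁) (l₂ := l₂)
    (x := x) (y := y)
  set Λ := spectralWeight l₁ l₂
  have hΛ : 0 < Λ := by linarith
  obtain ⟨p, τ, hτ, hτΛ, hadapt, hcoeff⟩ := hcenter Λ hΛ1 x
  have hm := (hG₀.opdamMajorant_pos l₁ x).le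
  refine (hG.isCherednikSolution.norm_iteratedFDeriv_le_of_isAdapted hN hη.le hτ
    (hτΛ.trans (inv_le_one_of_one_le₀ hΛ1)) hadapt
    (A := A + (‖rhoHO D‖ + 2)) (K := K) (Λ := Λ)
    (B := B * (Real.exp (‖rhoHO D‖ + 1) * opdamMajorant D G₀ l₁ x)) (by positivity) (by positivity)
    hΛ.le (fun α hα j hj p y hy => ?_) ?_ (fun w y hy j hj => ?_) (Finset.sum_nonneg hterm)
    (fun α hα => Finset.single_le_sum hterm hα) ?_).trans_eq (by ring)
  · exact (hcoeff α hα j hj p y hy).trans (mul_le_mul_of_nonneg_right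
      (le_add_of_nonneg_right (by positivity)) (pow_nonneg hΛ.le j))
  · exact hχ.trans (mul_le_mul_of_nonneg_right (le_add_of_nonneg_left (by positivity)) hΛ.le)
  · have hxp : ‖x - p‖ ≤ Λ⁻¹ := (hadapt x (right_mem_segment ℝ p x)).norm_sub_le.trans
      ((mul_le_of_le_one_left hτ.le hη1).trans hτΛ)
    have hyx : ‖y - x‖ ≤ Λ⁻¹ := (norm_sub_le_of_mem_segment (segment_symm ℝ p x ▸ hy)).trans
      (norm_sub_rev x p ▸ hxp)
    refine (hlow j hj l₁ l₂ G hG (w.1 y)).trans ?_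
    gcongr
    exact hmaj y hyx w
  · have hχτ : ‖spectralForm D l₁ l₂‖ * (η * τ) ≤ (‖rhoHO D‖ + 2) * η := calc
      _ ≤ (‖rhoHO D‖ + 2) * Λ * (η * Λ⁻¹) := by gcongr
      _ = (‖rhoHO D‖ + 2) * η := by field_simp
    linarith

theorem IsOpdamR.exists_forall_le_norm_iteratedFDeriv_le_opdamMajorant (hG₀ : IsOpdamR D 0 G₀)
    (N : ℕ) :
    ∃ C : ℝ, 0 < C ∧ ∀ j ≤ N, ∀ (l₁ l₂ : V) (G : V → ℂ), IsOpdamC D l₁ l₂ G → ∀ x,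
      ‖iteratedFDeriv ℝ j G x‖ ≤ C * opdamMajorant D G₀ l₁ x * spectralWeight l₁ l₂ ^ j := by
  induction N with
  | zero =>
    refine ⟨Fintype.card (weylGroup D), Nat.cast_pos.2 Fintype.card_pos,
      fun j hj l₁ l₂ G hG x => ?_⟩
    obtain rfl := Nat.le_zero.1 hj
    rw [norm_iteratedFDeriv_zero, pow_zero, mul_one]
    exact hG.norm_le_opdamMajorant hG₀ x
  | succ N ih =>
    obtain ⟨B, hB, hlow⟩ := ih
    obtain ⟨C, hC⟩ := hG₀.exists_norm_iteratedFDeriv_le_opdamMajorant_of_lt N.succ_pos hB.le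
      fun j hj => hlow j (Nat.lt_succ_iff.1 hj)
    refine ⟨max B C, lt_max_of_lt_left hB, fun j hj l₁ l₂ G hG x => ?_⟩
    have hm := (hG₀.opdamMajorant_pos l₁ x).le
    have hΛ := zero_le_one.trans (one_le_spectralWeight l₁ l₂)
    rcases Nat.le_succ_iff.1 hj with hj | rfl
    · exact (hlow j hj l₁ l₂ G hG x).trans (by gcongr; exact le_max_left B C)
    · exact (hC l₁ l₂ G hG x).trans (by gcongr; exact le_max_right B C)

end SpaceEstimate

section DifferenceQuotient

open scoped ContDiff Topology

variable {ι F : Type*} [NormedAddCommGroup F] [NormedSpace ℝ F] {S : Set ι} {g g' : ι → ℝ → F}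

theorem tendstoUniformlyOn_of_norm_deriv_le {A : ℝ} (hg : ∀ i t, HasDerivAt (g i) (g' i t) t)
    (hA : ∀ i ∈ S, ∀ t ∈ Set.Icc (0 : ℝ) 1, ‖g' i t‖ ≤ A) :
    TendstoUniformlyOn (fun t i => g i t) (fun i => g i 0) (𝓝[>] 0) S := by
  refine Metric.tendstoUniformlyOn_iff.2 fun ε hε => ?_
  have hlim : Filter.Tendsto (fun t => A * t) (𝓝[>] 0) (𝓝 (A * 0)) :=
    ((continuous_const_mul A).tendsto 0).mono_left nhdsWithin_le_nhds
  filter_upwards [hlim.eventually_lt_const (by simpa using hε), Ioc_mem_nhdsGT one_pos]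
    with t htε ht i hi
  have hmean := (convex_Icc (0 : ℝ) 1).norm_image_sub_le_of_norm_hasDerivWithin_le
    (fun s _ => (hg i s).hasDerivWithinAt) (hA i hi) (x := 0) (y := t) (by simp) ⟨ht.1.le, ht.2⟩
  rw [sub_zero, Real.norm_of_nonneg ht.1.le] at hmean
  rw [dist_comm, dist_eq_norm]
  exact hmean.trans_lt htε

theorem tendstoUniformlyOn_slope (hg : ∀ i t, HasDerivAt (g i) (g' i t) t)
    (hg' : TendstoUniformlyOn (fun t i => g' i t) (fun i => g' i 0) (𝓝[>] 0) S) :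
    TendstoUniformlyOn (fun t i => t⁻¹ • (g i t - g i 0)) (fun i => g' i 0) (𝓝[>] 0) S := by
  refine Metric.tendstoUniformlyOn_iff.2 fun ε hε => ?_
  obtain ⟨δ, hδ, hclose⟩ := mem_nhdsGT_iff_exists_Ioo_subset.1
    (Metric.tendstoUniformlyOn_iff.1 hg' (ε / 2) (half_pos hε))
  filter_upwards [Ioo_mem_nhdsGT hδ] with t ht i hi
  have hderiv : ∀ s, HasDerivAt (fun s => g i s - s • g' i 0) (g' i s - g' i 0) s := fun s => by
    simpa using (hg i s).fun_sub ((hasDerivAt_id s).smul_const (g' i 0))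
  have hmean := (convex_Icc (0 : ℝ) t).norm_image_sub_le_of_norm_hasDerivWithin_le (C := ε / 2)
    (fun s _ => (hderiv s).hasDerivWithinAt) (fun s hs => ?_) (x := 0) (y := t)
    ⟨le_rfl, ht.1.le⟩ ⟨ht.1.le, le_rfl⟩
  · have hsplit : t⁻¹ • (g i t - g i 0) - g' i 0 =
        t⁻¹ • (g i t - t • g' i 0 - (g i 0 - (0 : ℝ) • g' i 0)) := by
      rw [zero_smul, sub_zero, sub_right_comm, smul_sub t⁻¹ _ (t • _), inv_smul_smul₀ ht.1.ne']
    rw [dist_comm, dist_eq_norm, hsplit, norm_smul, norm_inv, Real.norm_of_nonneg ht.1.le,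
      inv_mul_lt_iff₀ ht.1]
    rw [sub_zero, Real.norm_of_nonneg ht.1.le] at hmean
    nlinarith [ht.1]
  · rcases hs.1.eq_or_lt with rfl | hs0
    · simpa using (half_pos hε).le
    · rw [← dist_eq_norm, dist_comm]
      exact (hclose ⟨hs0, hs.2.trans_lt ht.2⟩ i hi).le

theorem hasDerivAt_iteratedFDeriv_line {V : Type*} [NormedAddCommGroup V] [NormedSpace ℝ V]
    {f : V → F} (hf : ContDiff ℝ ∞ f) {N : ℕ} (x : V) (ξ : Fin (N + 1) → V) (t : ℝ) :
    HasDerivAt (fun t : ℝ => iteratedFDeriv ℝ N f (x + t • ξ 0) (Fin.tail ξ))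
      (iteratedFDeriv ℝ (N + 1) f (x + t • ξ 0) ξ) t := by
  have hline : HasDerivAt (fun t : ℝ => x + t • ξ 0) (ξ 0) t := by
    simpa using ((hasDerivAt_id t).smul_const (ξ 0)).const_add x
  rw [iteratedFDeriv_succ_apply_eq_fderiv hf]
  exact ((contDiff_iteratedFDeriv_apply hf (Fin.tail ξ)).differentiable (by simp)
    (x + t • ξ 0)).hasFDerivAt.comp_hasDerivAt t hline

end DifferenceQuotient

section SpectralDependence

open scoped Topology

variable {V : Type*} [NormedAddCommGroup V] [InnerProductSpace ℝ V] {D : HOData V}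
  {G : V → V → V → ℂ} {G₀ : V → ℝ}

theorem IsOpdamR.exists_forall_closedBall_norm_iteratedFDeriv_le [Finite (weylGroup D)]
    (hG₀ : IsOpdamR D 0 G₀) (hG : ∀ l₁ l₂, IsOpdamC D l₁ l₂ (G l₁ l₂)) (N : ℕ) (R r : ℝ) (x : V) :
    ∃ A : ℝ, ∀ q ∈ Metric.closedBall (0 : V × V) R, ∀ y ∈ Metric.closedBall x r,
      ‖iteratedFDeriv ℝ N (G q.1 q.2) y‖ ≤ A := by
  have := Fintype.ofFinite (weylGroup D)
  obtain ⟨C, hC, hspace⟩ := hG₀.exists_forall_le_norm_iteratedFDeriv_le_opdamMajorant N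
  refine ⟨C * (Real.exp (R * (‖x‖ + r)) * (Real.exp ((‖rhoHO D‖ + ‖(0 : V)‖) * r) *
    opdamMajorant D G₀ 0 x)) * ((2 + 2 * R) * spectralWeight (0 : V) 0) ^ N, fun q hq y hy => ?_⟩
  have hq₁ : ‖q.1 - 0‖ ≤ R := (norm_fst_le (q - 0)).trans (mem_closedBall_iff_norm.1 hq)
  have hq₂ : ‖q.2 - 0‖ ≤ R := (norm_snd_le (q - 0)).trans (mem_closedBall_iff_norm.1 hq)
  have hyx : ‖y - x‖ ≤ r := mem_closedBall_iff_norm.1 hy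
  have hy : ‖y‖ ≤ ‖x‖ + r := (norm_le_norm_add_norm_sub' y x).trans (by gcongr)
  have hR : 0 ≤ R := (norm_nonneg _).trans hq₁
  have hm := (hG₀.opdamMajorant_pos 0 x).le
  have hΛ := zero_le_one.trans (one_le_spectralWeight q.1 q.2)
  refine (hspace N le_rfl q.1 q.2 _ (hG q.1 q.2) y).trans ?_
  gcongr
  · exact (hG₀.opdamMajorant_le_exp_mul_of_norm_sub 0 q.1 y).trans
      (mul_le_mul (Real.exp_le_exp.2 (mul_le_mul hq₁ hy (norm_nonneg y) hR))
        ((hG₀.opdamMajorant_le_exp_mul 0 x y).trans (by gcongr))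
        (hG₀.opdamMajorant_pos 0 y).le (Real.exp_pos _).le)
  · exact spectralWeight_le_two_add_mul hq₁ hq₂

/- Difference quotients in `x` are holomorphic in the spectral parameter, and the space estimates
make them converge locally uniformly to the next space derivative. -/
theorem IsOpdamR.isHolomorphicPair_iteratedFDeriv [FiniteDimensional ℝ V]
    [Finite (weylGroup D)] (hG₀ : IsOpdamR D 0 G₀) (hG : ∀ l₁ l₂, IsOpdamC D l₁ l₂ (G l₁ l₂))
    (hol : ∀ x, IsHolomorphicPair fun q : V × V => G q.1 q.2 x) (N : ℕ) (x : V) (ξ : Fin N → V) :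
    IsHolomorphicPair fun q : V × V => iteratedFDeriv ℝ N (G q.1 q.2) x ξ := by
  induction N generalizing x with
  | zero => simpa only [iteratedFDeriv_zero_apply] using hol x
  | succ N ih =>
    let g : V × V → ℝ → ℂ := fun q t => iteratedFDeriv ℝ N (G q.1 q.2) (x + t • ξ 0) (Fin.tail ξ)
    refine IsHolomorphicPair.of_tendstoUniformlyOn (l := 𝓝[>] (0 : ℝ))
      (G := fun t q => ((t⁻¹ : ℝ) : ℂ) • (g q t - g q 0))
      (fun t => ((ih _ (Fin.tail ξ)).sub (ih _ (Fin.tail ξ))).const_smul _) fun R => ?_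
    obtain ⟨A, hA⟩ :=
      hG₀.exists_forall_closedBall_norm_iteratedFDeriv_le hG (N + 2) R ‖ξ 0‖ x
    have hderiv : ∀ {n : ℕ} (ζ : Fin (n + 1) → V) (q : V × V), _ := fun ζ q =>
      hasDerivAt_iteratedFDeriv_line (hG q.1 q.2).isCherednikSolution.contDiff x ζ
    let ζ : Fin (N + 2) → V := Fin.cons (ξ 0) ξ
    have hslope := tendstoUniformlyOn_slope (S := Metric.closedBall 0 R) (hderiv ξ) <|
      tendstoUniformlyOn_of_norm_deriv_le (A := A * ∏ i, ‖ζ i‖) (hderiv ζ) fun q hq t ht => ?_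
    · simpa only [g, zero_smul, add_zero, Complex.coe_smul] using hslope
    · refine ContinuousMultilinearMap.le_of_opNorm_le (hA q hq _ ?_) ζ
      rw [mem_closedBall_iff_norm, add_sub_cancel_left, norm_smul, Real.norm_of_nonneg ht.1]
      exact mul_le_of_le_one_left (norm_nonneg _) ht.2

theorem IsOpdamR.opdamMajorant_mul_spectralWeight_pow_le [Fintype (weylGroup D)]
    (hG₀ : IsOpdamR D 0 G₀) {M N : ℕ} {l₁ l₂ x : V} {q : V × V}
    (hq : q ∈ Metric.closedBall (l₁, l₂) (M * (1 + ‖x‖)⁻¹)) :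
    opdamMajorant D G₀ q.1 x * spectralWeight q.1 q.2 ^ N ≤
      Real.exp M * (2 + 2 * M) ^ N * (opdamMajorant D G₀ l₁ x * spectralWeight l₁ l₂ ^ N) := by
  have hq := mem_closedBall_iff_norm.1 hq
  have hx : 1 ≤ 1 + ‖x‖ := le_add_of_nonneg_right (norm_nonneg x)
  have hM : (M : ℝ) * (1 + ‖x‖)⁻¹ ≤ M :=
    mul_le_of_le_one_right M.cast_nonneg (inv_le_one_of_one_le₀ hx)
  have hq₁ : ‖q.1 - l₁‖ ≤ M * (1 + ‖x‖)⁻¹ := (norm_fst_le (q - (l₁, l₂))).trans hq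
  have hq₂ : ‖q.2 - l₂‖ ≤ M * (1 + ‖x‖)⁻¹ := (norm_snd_le (q - (l₁, l₂))).trans hq
  have hexp : ‖q.1 - l₁‖ * ‖x‖ ≤ M := calc
    _ ≤ M * (1 + ‖x‖)⁻¹ * (1 + ‖x‖) :=
      mul_le_mul hq₁ (le_add_of_nonneg_left zero_le_one) (norm_nonneg x) (by positivity)
    _ = M := inv_mul_cancel_right₀ (by positivity) _
  have hm := (hG₀.opdamMajorant_pos l₁ x).le
  have hΛ := zero_le_one.trans (one_le_spectralWeight q.1 q.2)
  calc opdamMajorant D G₀ q.1 x * spectralWeight q.1 q.2 ^ N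
    _ ≤ Real.exp M * opdamMajorant D G₀ l₁ x * ((2 + 2 * M) * spectralWeight l₁ l₂) ^ N := by
        gcongr
        · exact (hG₀.opdamMajorant_le_exp_mul_of_norm_sub l₁ q.1 x).trans (by gcongr)
        · exact spectralWeight_le_two_add_mul (hq₁.trans hM) (hq₂.trans hM)
    _ = _ := by rw [mul_pow]; ring

end SpectralDependence

/-- assuming moreover that `λ ↦ G_λ(x)` is holomorphic on `h`
(real-analytic on `a × a` and satisfying the Cauchy–Riemann equations), for all `M, N`
there is `C > 0` such that, for unit directions `η₁,…,η_M` in the spectral variable and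
`ξ₁,…,ξ_N` in the space variable,
`|∂^{(λ)}_{η₁} ⋯ ∂^{(λ)}_{η_M} ∂^{(x)}_{ξ₁} ⋯ ∂^{(x)}_{ξ_N} G_λ(x)|
  ≤ C (1+|x|)^M (1+|λ|)^N F₀(x) e^{max_w Re (wλ, x)}`. -/
theorem statement16 (D : HOData E) [Fintype (weylGroup D)]
    (G : E → E → E → ℂ) (hG : ∀ l1 l2, IsOpdamC D l1 l2 (G l1 l2))
    (hol : ∀ x : E, AnalyticOnNhd ℝ (fun p : E × E => G p.1 p.2 x) Set.univ ∧
      ∀ (p : E × E) (η : E),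
        fderiv ℝ (fun q : E × E => G q.1 q.2 x) p (0, η)
          = Complex.I * fderiv ℝ (fun q : E × E => G q.1 q.2 x) p (η, 0))
    (Gzero : E → ℝ) (hG0 : IsOpdamR D 0 Gzero) (M N : ℕ) :
    ∃ C : ℝ, 0 < C ∧ ∀ (l1 l2 x : E) (η : Fin M → E) (ξ : Fin N → E),
      (∀ i, ‖η i‖ = 1) → (∀ i, ‖ξ i‖ = 1) →
      ‖iteratedFDeriv ℝ M (fun l => iteratedFDeriv ℝ N (G l l2) x ξ) l1 η‖ ≤
        C * (1 + ‖x‖) ^ M * (1 + Real.sqrt (‖l1‖ ^ 2 + ‖l2‖ ^ 2)) ^ N *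
          Fsym D Gzero x * Real.exp (maxW D l1 x) := by
  have hpair : ∀ x, IsHolomorphicPair fun q : E × E => G q.1 q.2 x := fun x =>
    ⟨contDiff_iff_contDiffAt.2 fun p => ((hol x).1 p (Set.mem_univ p)).contDiffAt, (hol x).2⟩
  obtain ⟨C, hC, hspace⟩ := hG0.exists_forall_le_norm_iteratedFDeriv_le_opdamMajorant N
  refine ⟨C * (Real.exp M * (2 + 2 * M) ^ N), by positivity, fun l1 l2 x η ξ hη hξ => ?_⟩
  have hbound : ∀ q ∈ Metric.closedBall (l1, l2) (M * (1 + ‖x‖)⁻¹),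
      ‖iteratedFDeriv ℝ N (G q.1 q.2) x ξ‖ ≤ C * (Real.exp M * (2 + 2 * M) ^ N *
        (opdamMajorant D Gzero l1 x * spectralWeight l1 l2 ^ N)) := fun q hq => calc
    _ ≤ C * opdamMajorant D Gzero q.1 x * spectralWeight q.1 q.2 ^ N * ∏ i, ‖ξ i‖ :=
      ContinuousMultilinearMap.le_of_opNorm_le (hspace N le_rfl q.1 q.2 _ (hG q.1 q.2) x) ξ
    _ = C * (opdamMajorant D Gzero q.1 x * spectralWeight q.1 q.2 ^ N) := by
      rw [Finset.prod_eq_one fun i _ => hξ i, mul_one, mul_assoc]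
    _ ≤ _ := mul_le_mul_of_nonneg_left (hG0.opdamMajorant_mul_spectralWeight_pow_le hq) hC.le
  refine ((hG0.isHolomorphicPair_iteratedFDeriv hG hpair N x ξ).norm_iteratedFDeriv_le
    (p := (l1, l2)) (by positivity) hbound η).trans_eq ?_
  rw [Finset.prod_eq_one fun i _ => hη i, opdamMajorant, spectralWeight, inv_pow, div_inv_eq_mul]
  ring
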